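/- There exists a constant κ such that for every integer k ≥ κ and every positive integer x for which all of x, x+1, …, x+k−1 are composite (none of them is prime), the greatest prime factor of the product x(x+1)⋯(x+k−1) satisfies P(x(x+1)⋯(x+k−1)) > (2/7)·k·log k. -/

import Mathlib

/-- The greatest prime factor of a natural number (`0` for `n ≤ 1`). -/
def maxPrimeFac (n : ℕ) : ℕ := n.primeFactors.sup id

/-!
For `k ≤ x`, every prime power dividing `(x + k - 1).choose k` is at most `x + k - 1`, so that
`k log (x / k) ≤ ω log (2 x)`, where `ω` is the number of prime factors of this binomial
coefficient. Assume that all of them are at most `Y = (2 / 7) k log k`. Chebyshev's bound on `π Y`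
gives `ω ≤ 2 k / 5`, hence `log x ≤ (5 / 3) log k + 2 / 3`. Then a prime factor `p > k` of
`x (x + 1) ⋯ (x + k - 1)` lies in one of the intervals `[x / m, (x + k) / m)` with
`x / Y ≤ m ≤ 2 x / k`, and Selberg's upper bound sieve on these intervals improves the estimate to
`ω ≪ k log log k / log k`, hence `x ≤ k (log k) ^ 10000`.

In that range `[x, x + k)` contains a prime, because for every `A` and all large `L` there is a
prime `p` with `L < log p < L + L ^ (-A)`: polynomial bounds for `ζ` slightly to the left of
`Re s = 1` and the inequality `3 + 4 cos θ + cos 2θ ≥ 0` bound `1 / ζ`, hence every derivative of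
`-ζ' / ζ - ζ`, polynomially up to that line, and Fourier inversion against a smooth bump turns this
into an error term smaller than every power of `L`. The case `x < k` is Bertrand's postulate.
-/

/-! ### Polynomial growth of the zeta function near the line `Re s = 1` -/

section ZetaGrowth

open Complex Filter Topology

/-- The term at `a` of the telescoping series `(s - 1) ζ(s) = 1 + ∑ n, zetaRemainder (n + 1) s`,
which converges in the whole half-plane `0 < Re s`: the function `(s - 1) a ^ (-s)` minus its
integral over `[a, a + 1]`. -/
noncomputable def zetaRemainder (a : ℝ) (s : ℂ) : ℂ :=
  (s - 1) * (a : ℂ) ^ (-s) - ((a : ℂ) ^ (1 - s) - ((a + 1 : ℝ) : ℂ) ^ (1 - s))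

theorem norm_ofReal_cpow_neg_sub_le {a u : ℝ} (ha : 0 < a) (hau : a ≤ u) {s : ℂ}
    (hs : 0 < s.re) :
    ‖(a : ℂ) ^ (-s) - (u : ℂ) ^ (-s)‖ ≤ ‖s‖ * a ^ (-s.re - 1) * (u - a) := by
  have hs0 : -s ≠ 0 := by rintro h; simp [neg_eq_zero.1 h] at hs
  have hderiv : ∀ y ∈ Set.Icc a u, HasDerivWithinAt (fun y : ℝ ↦ (y : ℂ) ^ (-s))
      (-s * (y : ℂ) ^ (-s - 1)) (Set.Icc a u) y := fun y hy ↦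
    (hasDerivAt_ofReal_cpow_const (by linarith [hy.1] : y ≠ 0) hs0).hasDerivWithinAt
  have hbound : ∀ y ∈ Set.Icc a u, ‖-s * (y : ℂ) ^ (-s - 1)‖ ≤ ‖s‖ * a ^ (-s.re - 1) := by
    intro y hy
    rw [norm_mul, norm_neg, norm_cpow_eq_rpow_re_of_pos (ha.trans_le hy.1)]
    gcongr
    simpa using Real.rpow_le_rpow_of_nonpos ha hy.1 (by linarith : -s.re - 1 ≤ 0)
  rw [norm_sub_rev, ← Real.norm_of_nonneg (sub_nonneg.2 hau)]
  exact (convex_Icc a u).norm_image_sub_le_of_norm_hasDerivWithin_le hderiv hbound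
    (Set.left_mem_Icc.2 hau) (Set.right_mem_Icc.2 hau)

theorem norm_zetaRemainder_le {a : ℝ} (ha : 0 < a) {s : ℂ} (hs : 0 < s.re) :
    ‖zetaRemainder a s‖ ≤ ‖s - 1‖ * ‖s‖ * a ^ (-s.re - 1) := by
  obtain rfl | h1 := eq_or_ne s 1
  · simp [zetaRemainder]
  have hs1 : 1 - s ≠ 0 := sub_ne_zero.2 h1.symm
  let f : ℝ → ℂ := fun y ↦ y * ((s - 1) * (a : ℂ) ^ (-s)) + (y : ℂ) ^ (1 - s)
  have hderiv : ∀ y ∈ Set.Icc a (a + 1), HasDerivWithinAt f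
      ((s - 1) * ((a : ℂ) ^ (-s) - (y : ℂ) ^ (-s))) (Set.Icc a (a + 1)) y := by
    intro y hy
    have hpow := hasDerivAt_ofReal_cpow_const (by linarith [hy.1] : y ≠ 0) hs1
    rw [show 1 - s - 1 = -s by ring] at hpow
    refine (((ofRealCLM.hasDerivAt (x := y)).mul_const _).add hpow).hasDerivWithinAt.congr_deriv ?_
    rw [ofRealCLM_apply, ofReal_one]
    ring
  have hbound : ∀ y ∈ Set.Icc a (a + 1),
      ‖(s - 1) * ((a : ℂ) ^ (-s) - (y : ℂ) ^ (-s))‖ ≤ ‖s - 1‖ * ‖s‖ * a ^ (-s.re - 1) := by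
    intro y hy
    rw [norm_mul, mul_assoc]
    gcongr
    refine (norm_ofReal_cpow_neg_sub_le ha hy.1 hs).trans ?_
    exact mul_le_of_le_one_right (by positivity) (by linarith [hy.2])
  have hle : a ≤ a + 1 := by linarith
  have hf : zetaRemainder a s = f (a + 1) - f a := by
    simp only [zetaRemainder, f]
    push_cast
    ring
  simpa [hf] using (convex_Icc a (a + 1)).norm_image_sub_le_of_norm_hasDerivWithin_le hderiv
    hbound (Set.left_mem_Icc.2 hle) (Set.right_mem_Icc.2 hle)

theorem summable_nat_add_one_rpow_neg {c : ℝ} (hc : 1 < c) :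
    Summable fun n : ℕ ↦ ((n : ℝ) + 1) ^ (-c) := by
  simpa using (summable_nat_add_iff 1).2 (Real.summable_nat_rpow.2 (neg_lt_neg hc))

theorem summable_zetaRemainder {s : ℂ} (hs : 0 < s.re) :
    Summable fun n : ℕ ↦ zetaRemainder (n + 1) s := by
  refine .of_norm_bounded (g := fun n : ℕ ↦ ‖s - 1‖ * ‖s‖ * ((n : ℝ) + 1) ^ (-(s.re + 1)))
    ((summable_nat_add_one_rpow_neg (by linarith)).mul_left _) fun n ↦ ?_
  rw [neg_add']
  exact norm_zetaRemainder_le n.cast_add_one_pos hs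

theorem differentiable_zetaRemainder {a : ℝ} (ha : 0 < a) :
    Differentiable ℂ (zetaRemainder a) := by
  have h (b : ℝ) (hb : 0 < b) {f : ℂ → ℂ} (hf : Differentiable ℂ f) :
      Differentiable ℂ fun s ↦ (b : ℂ) ^ f s := fun s ↦
    (hf s).const_cpow (.inl (ofReal_ne_zero.2 hb.ne'))
  exact ((differentiable_id.sub_const 1).mul (h a ha differentiable_neg)).sub
    ((h a ha (differentiable_id.const_sub 1)).sub
      (h (a + 1) (by linarith) (differentiable_id.const_sub 1)))

theorem differentiableOn_tsum_zetaRemainder :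
    DifferentiableOn ℂ (fun s ↦ ∑' n : ℕ, zetaRemainder (n + 1) s) {s | 0 < s.re} := by
  intro s (hs : 0 < s.re)
  set U : Set ℂ := {w | s.re / 2 < w.re} ∩ Metric.ball 0 (‖s‖ + 1)
  have hU : IsOpen U := (isOpen_lt continuous_const continuous_re).inter Metric.isOpen_ball
  have hsU : s ∈ U := ⟨half_lt_self hs, by simp⟩
  have hdiff : DifferentiableOn ℂ (fun s ↦ ∑' n : ℕ, zetaRemainder (n + 1) s) U := by
    refine differentiableOn_tsum_of_summable_norm
      (u := fun n : ℕ ↦ (‖s‖ + 2) * (‖s‖ + 1) * ((n : ℝ) + 1) ^ (-(s.re / 2 + 1)))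
      ((summable_nat_add_one_rpow_neg (by linarith)).mul_left _)
      (fun n ↦ (differentiable_zetaRemainder n.cast_add_one_pos).differentiableOn) hU
      fun n w ⟨(hw : s.re / 2 < w.re), hws⟩ ↦ ?_
    have hws : ‖w‖ < ‖s‖ + 1 := by simpa using hws
    have hw1 : ‖w - 1‖ ≤ ‖s‖ + 2 := (norm_sub_le _ _).trans (by simp; linarith)
    refine (norm_zetaRemainder_le n.cast_add_one_pos (by linarith)).trans ?_
    gcongr <;> linarith
  exact (hdiff.differentiableAt (hU.mem_nhds hsU)).differentiableWithinAt

theorem sum_range_zetaRemainder (N : ℕ) (s : ℂ) :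
    ∑ n ∈ Finset.range N, zetaRemainder (n + 1) s =
      (s - 1) * ∑ n ∈ Finset.range N, ((n : ℂ) + 1) ^ (-s) - (1 - ((N : ℂ) + 1) ^ (1 - s)) := by
  induction N with
  | zero => simp
  | succ N ih =>
    rw [Finset.sum_range_succ, ih, Finset.sum_range_succ, zetaRemainder]
    push_cast
    ring

theorem riemannZeta₁_eq_mul {s : ℂ} (hs : s ≠ 1) : riemannZeta₁ s = (s - 1) * riemannZeta s := by
  rw [riemannZeta_eq_inv_sub_mul hs, mul_inv_cancel_left₀ (sub_ne_zero.2 hs)]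

theorem norm_natCast_add_one_cpow (n : ℕ) (s : ℂ) :
    ‖((n : ℂ) + 1) ^ s‖ = ((n : ℝ) + 1) ^ s.re := by
  exact_mod_cast norm_natCast_cpow_of_pos n.succ_pos s

theorem riemannZeta₁_eq_one_add_tsum_of_one_lt_re {s : ℂ} (hs : 1 < s.re) :
    riemannZeta₁ s = 1 + ∑' n : ℕ, zetaRemainder (n + 1) s := by
  have hzeta : HasSum (fun n : ℕ ↦ ((n : ℂ) + 1) ^ (-s)) (riemannZeta s) := by
    have hsum : Summable fun n : ℕ ↦ 1 / ((n : ℂ) + 1) ^ s := by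
      simpa using (summable_nat_add_iff 1).2 (summable_one_div_nat_cpow.2 hs)
    simpa [zeta_eq_tsum_one_div_nat_add_one_cpow hs, cpow_neg] using hsum.hasSum
  have hpow : Tendsto (fun N : ℕ ↦ ((N : ℂ) + 1) ^ (1 - s)) atTop (𝓝 0) := by
    rw [tendsto_zero_iff_norm_tendsto_zero]
    simp_rw [norm_natCast_add_one_cpow, show (1 - s).re = -(s.re - 1) by simp]
    exact (tendsto_rpow_neg_atTop (sub_pos.2 hs)).comp
      (tendsto_atTop_add_const_right _ 1 tendsto_natCast_atTop_atTop)
  have hlim := (hzeta.tendsto_sum_nat.const_mul (s - 1)).sub (hpow.const_sub 1)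
  simp_rw [← sum_range_zetaRemainder] at hlim
  have hs1 : s ≠ 1 := by rintro rfl; simp at hs
  rw [tendsto_nhds_unique (summable_zetaRemainder (by linarith)).hasSum.tendsto_sum_nat hlim,
    riemannZeta₁_eq_mul hs1]
  ring

theorem riemannZeta₁_eq_one_add_tsum {s : ℂ} (hs : 0 < s.re) :
    riemannZeta₁ s = 1 + ∑' n : ℕ, zetaRemainder (n + 1) s := by
  have hopen (c : ℝ) : IsOpen {s : ℂ | c < s.re} := isOpen_lt continuous_const continuous_re
  refine (differentiable_riemannZeta₁.differentiableOn.analyticOnNhd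
    (hopen 0)).eqOn_of_preconnected_of_eventuallyEq
    ((differentiableOn_tsum_zetaRemainder.const_add 1).analyticOnNhd (hopen 0))
    (convex_halfSpace_re_gt 0).isPreconnected (z₀ := 2) (by simp) ?_ hs
  filter_upwards [(hopen 1).mem_nhds (by simp : (1 : ℝ) < (2 : ℂ).re)] with z hz
    using riemannZeta₁_eq_one_add_tsum_of_one_lt_re hz

theorem sub_one_mul_riemannZeta_eq {s : ℂ} (hs : 0 < s.re) (hs1 : s ≠ 1) (N : ℕ) :
    (s - 1) * riemannZeta s = (s - 1) * ∑ n ∈ Finset.range N, ((n : ℂ) + 1) ^ (-s)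
      + ((N : ℂ) + 1) ^ (1 - s) + ∑' n : ℕ, zetaRemainder ((n + N : ℕ) + 1) s := by
  rw [← riemannZeta₁_eq_mul hs1, riemannZeta₁_eq_one_add_tsum hs,
    ← (summable_zetaRemainder hs).sum_add_tsum_nat_add N, sum_range_zetaRemainder]
  ring

variable {η T : ℝ} {s : ℂ}

theorem norm_sum_range_cpow_neg_le (hη : 0 < η) (hs : 1 - η ≤ s.re) {N : ℕ} (hN : N ≤ T) :
    ‖∑ n ∈ Finset.range N, ((n : ℂ) + 1) ^ (-s)‖ ≤
      (∑' n : ℕ, ((n : ℝ) + 1) ^ (-(1 + η))) * T ^ (2 * η) := by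
  have hterm : ∀ n ∈ Finset.range N,
      ‖((n : ℂ) + 1) ^ (-s)‖ ≤ ((n : ℝ) + 1) ^ (-(1 + η)) * T ^ (2 * η) := by
    intro n hn
    have hnN : (n : ℝ) + 1 ≤ N := by exact_mod_cast Finset.mem_range.1 hn
    calc ‖((n : ℂ) + 1) ^ (-s)‖ = ((n : ℝ) + 1) ^ (-s.re) := norm_natCast_add_one_cpow n _
      _ ≤ ((n : ℝ) + 1) ^ (-(1 + η) + 2 * η) :=
        Real.rpow_le_rpow_of_exponent_le (by simp) (by linarith)
      _ = ((n : ℝ) + 1) ^ (-(1 + η)) * ((n : ℝ) + 1) ^ (2 * η) := Real.rpow_add (by positivity) ..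
      _ ≤ ((n : ℝ) + 1) ^ (-(1 + η)) * T ^ (2 * η) := by gcongr; linarith
  refine (norm_sum_le_of_le _ hterm).trans ?_
  rw [← Finset.sum_mul]
  have hT : 0 ≤ T := N.cast_nonneg.trans hN
  gcongr
  exact (summable_nat_add_one_rpow_neg (by linarith)).sum_le_tsum _ fun n _ ↦ by positivity

theorem norm_tsum_zetaRemainder_add_le (hη : 0 < η) (hη' : 2 * η ≤ 1) (hs : 1 - η ≤ s.re)
    (hT : 0 < T) {N : ℕ} (hN : T ≤ N + 1) :
    ‖∑' n : ℕ, zetaRemainder ((n + N : ℕ) + 1) s‖ ≤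
      ‖s - 1‖ * ‖s‖ * T ^ (2 * η - 1) * ∑' n : ℕ, ((n : ℝ) + 1) ^ (-(1 + η)) := by
  have hsum := summable_nat_add_one_rpow_neg (by linarith : 1 < 1 + η)
  have hterm (n : ℕ) : ‖zetaRemainder ((n + N : ℕ) + 1) s‖ ≤
      ‖s - 1‖ * ‖s‖ * T ^ (2 * η - 1) * (((n + N : ℕ) : ℝ) + 1) ^ (-(1 + η)) := by
    set a : ℝ := ((n + N : ℕ) : ℝ) + 1 with ha
    have ha1 : 1 ≤ a := le_add_of_nonneg_left (n + N).cast_nonneg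
    have hTa : T ≤ a := by push_cast [ha]; linarith [n.cast_nonneg (α := ℝ)]
    calc ‖zetaRemainder a s‖ ≤ ‖s - 1‖ * ‖s‖ * a ^ (-s.re - 1) :=
          norm_zetaRemainder_le (by linarith) (by linarith)
      _ ≤ ‖s - 1‖ * ‖s‖ * (a ^ (2 * η - 1) * a ^ (-(1 + η))) := by
        rw [← Real.rpow_add (by linarith)]
        gcongr
        linarith
      _ ≤ ‖s - 1‖ * ‖s‖ * (T ^ (2 * η - 1) * a ^ (-(1 + η))) := by
        gcongr ‖s - 1‖ * ‖s‖ * (?_ * _)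
        exact Real.rpow_le_rpow_of_nonpos hT hTa (by linarith)
      _ = _ := by ring
  refine (tsum_of_norm_bounded (((summable_nat_add_iff N).2 hsum).mul_left _).hasSum hterm).trans ?_
  rw [tsum_mul_left, ← hsum.sum_add_tsum_nat_add N]
  gcongr
  exact le_add_of_nonneg_left (Finset.sum_nonneg fun n _ ↦ by positivity)

theorem rpow_le_two_mul_rpow {ε y : ℝ} (hε : 0 ≤ ε) (hε' : ε ≤ 1) (hT : 0 ≤ T) (hy : 0 ≤ y)
    (hyT : y ≤ 2 * T) : y ^ ε ≤ 2 * T ^ ε := by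
  calc y ^ ε ≤ (2 * T) ^ ε := by gcongr
    _ = 2 ^ ε * T ^ ε := Real.mul_rpow (by norm_num) hT
    _ ≤ 2 * T ^ ε := by
      gcongr
      simpa using Real.rpow_le_rpow_of_exponent_le (one_le_two (α := ℝ)) hε'

theorem natCast_add_one_rpow_le (hη' : 2 * η ≤ 1) (hη : 0 < η) (hs : 1 - η ≤ s.re)
    {N : ℕ} (hT : 1 ≤ T) (hN : N ≤ T) : ((N : ℝ) + 1) ^ (1 - s).re ≤ 2 * T ^ (2 * η) := by
  calc ((N : ℝ) + 1) ^ (1 - s).re ≤ ((N : ℝ) + 1) ^ (2 * η) :=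
        Real.rpow_le_rpow_of_exponent_le (by simp) (by simp; linarith)
    _ ≤ 2 * T ^ (2 * η) :=
      rpow_le_two_mul_rpow (by linarith) hη' (by linarith) (by positivity) (by linarith)

theorem exists_norm_riemannZeta_le_rpow (hη : 0 < η) (hη' : 2 * η ≤ 1) :
    ∃ C : ℝ, 0 < C ∧ ∀ s : ℂ, 1 - η ≤ s.re → s.re ≤ 3 → 1 ≤ |s.im| →
      ‖riemannZeta s‖ ≤ C * |s.im| ^ (2 * η) := by
  set Z := ∑' n : ℕ, ((n : ℝ) + 1) ^ (-(1 + η))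
  have : 0 ≤ Z := tsum_nonneg fun n ↦ by positivity
  refine ⟨5 * Z + 2, by positivity, fun s hs hs3 hT ↦ ?_⟩
  set T := |s.im| with hTdef
  have hN : (⌊T⌋₊ : ℝ) ≤ T := Nat.floor_le (by linarith)
  have hs0 : 0 < s.re := by linarith
  have hs1 : s ≠ 1 := by rintro rfl; simp at hTdef; linarith
  have hTs : 1 ≤ ‖s - 1‖ := hT.trans (by simpa using abs_im_le_norm (s - 1))
  have hsT : ‖s‖ ≤ 4 * T := by
    have := norm_le_abs_re_add_abs_im s
    rw [abs_of_pos hs0] at this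
    linarith
  have hsum := norm_sum_range_cpow_neg_le hη hs hN
  have hpow : ‖((⌊T⌋₊ : ℂ) + 1) ^ (1 - s)‖ ≤ ‖s - 1‖ * (2 * T ^ (2 * η)) := by
    rw [norm_natCast_add_one_cpow]
    exact (natCast_add_one_rpow_le hη' hη hs hT hN).trans
      (le_mul_of_one_le_left (by positivity) hTs)
  have htail : ‖∑' n : ℕ, zetaRemainder ((n + ⌊T⌋₊ : ℕ) + 1) s‖ ≤
      ‖s - 1‖ * (4 * Z * T ^ (2 * η)) := by
    calc _ ≤ ‖s - 1‖ * ‖s‖ * T ^ (2 * η - 1) * Z :=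
          norm_tsum_zetaRemainder_add_le hη hη' hs (by linarith) (Nat.lt_floor_add_one T).le
      _ ≤ ‖s - 1‖ * (4 * T) * T ^ (2 * η - 1) * Z := by gcongr
      _ = ‖s - 1‖ * (4 * Z * T ^ (2 * η)) := by
        rw [Real.rpow_sub_one (by linarith)]
        field_simp
  refine le_of_mul_le_mul_left ?_ (by linarith : 0 < ‖s - 1‖)
  calc ‖s - 1‖ * ‖riemannZeta s‖ = ‖(s - 1) * riemannZeta s‖ := (norm_mul _ _).symm
    _ ≤ ‖s - 1‖ * (Z * T ^ (2 * η)) + ‖s - 1‖ * (2 * T ^ (2 * η)) +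
        ‖s - 1‖ * (4 * Z * T ^ (2 * η)) := by
      rw [sub_one_mul_riemannZeta_eq hs0 hs1 ⌊T⌋₊]
      refine norm_add₃_le.trans ?_
      rw [norm_mul]
      gcongr
    _ = ‖s - 1‖ * ((5 * Z + 2) * T ^ (2 * η)) := by ring

end ZetaGrowth

section ZetaLowerBound

open Complex Filter Topology Metric

/-- Bounds `O(|t| ^ ε)`, with constant `C`, for `ζ(σ + it)` and `ζ'(σ + it)` in a strip reaching
slightly to the left of `σ = 1`. -/
structure ZetaUpperBound (ε C : ℝ) : Prop where
  one_le : 1 ≤ C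
  norm_le : ∀ s : ℂ, 1 - ε / 4 ≤ s.re → s.re ≤ 5 / 2 → 3 / 2 ≤ |s.im| →
    ‖riemannZeta s‖ ≤ C * |s.im| ^ ε
  norm_deriv_le : ∀ s : ℂ, 1 - ε / 4 ≤ s.re → s.re ≤ 5 / 2 → 3 / 2 ≤ |s.im| →
    ‖deriv riemannZeta s‖ ≤ C * |s.im| ^ ε

/-- A lower bound for `ζ(σ + it)`, losing only a power of `|t| ^ ε`, in a zero-free region that
narrows like a power of `|t| ^ ε`. -/
structure ZetaLowerBound (ε c : ℝ) : Prop where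
  pos : 0 < c
  le_div_four : c ≤ ε / 4
  le_norm : ∀ s : ℂ, 3 / 2 ≤ |s.im| → 1 - c / (|s.im| ^ ε) ^ 5 ≤ s.re → s.re ≤ 5 / 2 →
    c / (|s.im| ^ ε) ^ 4 ≤ ‖riemannZeta s‖

variable {ε C c r : ℝ} {s z : ℂ}

theorem re_mem_Icc_of_mem_closedBall (hz : z ∈ closedBall s r) :
    z.re ∈ Set.Icc (s.re - r) (s.re + r) := by
  have h := abs_le.1 ((abs_re_le_norm (z - s)).trans (mem_closedBall_iff_norm.1 hz))
  rw [sub_re] at h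
  constructor <;> linarith

theorem abs_im_mem_Icc_of_mem_closedBall (hz : z ∈ closedBall s r) :
    |z.im| ∈ Set.Icc (|s.im| - r) (|s.im| + r) := by
  have h := (abs_im_le_norm (z - s)).trans (mem_closedBall_iff_norm.1 hz)
  rw [sub_im] at h
  have h' := abs_le.1 ((abs_abs_sub_abs_le z.im s.im).trans h)
  constructor <;> linarith

theorem ne_one_of_abs_im_pos (hs : 0 < |s.im|) : s ≠ 1 := by
  rintro rfl
  simp at hs

theorem exists_zetaUpperBound (hε : 0 < ε) (hε' : ε ≤ 1) : ∃ C, ZetaUpperBound ε C := by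
  obtain ⟨C, hC0, hC⟩ := exists_norm_riemannZeta_le_rpow (η := ε / 2) (by linarith) (by linarith)
  rw [mul_div_cancel₀ ε two_ne_zero] at hC
  refine ⟨max (C * 2 / (ε / 4)) (max C 1), ⟨by simp, fun s h1 h2 h3 ↦ ?_, fun s h1 h2 h3 ↦ ?_⟩⟩
  · refine (hC s (by linarith) (by linarith) (by linarith)).trans ?_
    gcongr
    simp
  · have hball : ∀ z ∈ closedBall s (ε / 4),
        1 - ε / 2 ≤ z.re ∧ z.re ≤ 3 ∧ 1 ≤ |z.im| ∧ |z.im| ≤ 2 * |s.im| := by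
      intro z hz
      have hre := re_mem_Icc_of_mem_closedBall hz
      have him := abs_im_mem_Icc_of_mem_closedBall hz
      exact ⟨by linarith [hre.1], by linarith [hre.2], by linarith [him.1], by linarith [him.2]⟩
    have hdiff : DiffContOnCl ℂ riemannZeta (ball s (ε / 4)) := by
      refine DifferentiableOn.diffContOnCl fun z hz ↦ ?_
      rw [closure_ball _ (by positivity)] at hz
      refine (differentiableAt_riemannZeta (ne_one_of_abs_im_pos ?_)).differentiableWithinAt
      linarith [hball z hz]
    have hsphere : ∀ z ∈ sphere s (ε / 4), ‖riemannZeta z‖ ≤ C * 2 * |s.im| ^ ε := by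
      intro z hz
      obtain ⟨hre, hre', him, him'⟩ := hball z (sphere_subset_closedBall hz)
      refine (hC z hre hre' him).trans ?_
      rw [mul_assoc]
      gcongr
      exact rpow_le_two_mul_rpow hε.le hε' (by linarith) (abs_nonneg _) him'
    refine (norm_deriv_le_of_forall_mem_sphere_norm_le (by positivity) hdiff hsphere).trans ?_
    rw [mul_div_right_comm]
    gcongr
    exact le_max_left _ _

theorem one_le_norm_riemannZeta_product {x : ℝ} (hx : 0 < x) (y : ℝ) :
    1 ≤ ‖riemannZeta (1 + x)‖ ^ 3 * ‖riemannZeta (1 + x + I * y)‖ ^ 4 *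
      ‖riemannZeta (1 + x + 2 * I * y)‖ := by
  simpa [DirichletCharacter.LFunctionTrivChar, DirichletCharacter.LFunction_modOne_eq] using
    DirichletCharacter.norm_LFunction_product_ge_one (1 : DirichletCharacter ℂ 1) hx y

theorem exists_norm_riemannZeta_one_add_le_div (R : ℝ) :
    ∃ K : ℝ, 1 ≤ K ∧ ∀ x : ℝ, 0 < x → x ≤ R → ‖riemannZeta (1 + x)‖ ≤ K / x := by
  have hcont : Continuous fun x : ℝ ↦ riemannZeta₁ (1 + x) :=
    differentiable_riemannZeta₁.continuous.comp (by fun_prop)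
  obtain ⟨K, hK⟩ := (isCompact_Icc (a := (0 : ℝ)) (b := R)).exists_bound_of_continuousOn
    hcont.continuousOn
  refine ⟨max K 1, le_max_right _ _, fun x hx hxR ↦ ?_⟩
  have hx1 : (1 + x : ℂ) ≠ 1 := by simpa using hx.ne'
  rw [riemannZeta_eq_inv_sub_mul hx1, norm_mul, norm_inv, add_sub_cancel_left,
    norm_real, Real.norm_of_nonneg hx.le, inv_mul_eq_div]
  gcongr
  exact (hK x ⟨hx.le, hxR⟩).trans (le_max_left _ _)

theorem ZetaUpperBound.exists_pow_three_le (h : ZetaUpperBound ε C) (hε : 0 ≤ ε) (hε' : ε ≤ 1) :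
    ∃ D : ℝ, 1 ≤ D ∧ ∀ s : ℂ, 1 < s.re → s.re ≤ 5 / 2 → 3 / 2 ≤ |s.im| →
      (s.re - 1) ^ 3 ≤ D * |s.im| ^ ε * ‖riemannZeta s‖ ^ 4 := by
  obtain ⟨K, hK1, hK⟩ := exists_norm_riemannZeta_one_add_le_div 2
  have hC1 := h.one_le
  refine ⟨2 * C * K ^ 3, ?_, fun s hs hs' ht ↦ ?_⟩
  · nlinarith [one_le_pow₀ hK1 (n := 3)]
  set x := s.re - 1 with hx
  have hx0 : 0 < x := by linarith
  have hs_eq : (1 + x + I * s.im : ℂ) = s := by apply Complex.ext <;> simp [hx]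
  have hdouble : ‖riemannZeta (1 + x + 2 * I * s.im)‖ ≤ C * (2 * |s.im| ^ ε) := by
    refine (h.norm_le _ (by simp; linarith) (by simp; linarith)
      (by simp [abs_mul]; linarith)).trans ?_
    gcongr
    exact rpow_le_two_mul_rpow hε hε' (by positivity) (abs_nonneg _) (by simp [abs_mul])
  have h341 : 1 ≤ (K / x) ^ 3 * ‖riemannZeta s‖ ^ 4 * (C * (2 * |s.im| ^ ε)) := by
    refine (one_le_norm_riemannZeta_product hx0 s.im).trans ?_
    rw [hs_eq]
    gcongr
    exact hK x hx0 (by linarith)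
  rw [show (K / x) ^ 3 * ‖riemannZeta s‖ ^ 4 * (C * (2 * |s.im| ^ ε)) =
    2 * C * K ^ 3 * |s.im| ^ ε * ‖riemannZeta s‖ ^ 4 / x ^ 3 by field_simp] at h341
  exact (one_le_div₀ (by positivity)).1 h341

theorem ZetaUpperBound.norm_sub_le (h : ZetaUpperBound ε C) (him : z.im = s.im)
    (ht : 3 / 2 ≤ |s.im|) (hs : s.re ∈ Set.Icc (1 - ε / 4) (5 / 2))
    (hz : z.re ∈ Set.Icc (1 - ε / 4) (5 / 2)) :
    ‖riemannZeta z - riemannZeta s‖ ≤ C * |s.im| ^ ε * |z.re - s.re| := by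
  have hconv : Convex ℝ (Set.Icc (1 - ε / 4) (5 / 2) ×ℂ {s.im}) :=
    ((convex_Icc _ _).linear_preimage reLm).inter ((convex_singleton _).linear_preimage imLm)
  have hnorm : ‖z - s‖ = |z.re - s.re| := by
    rw [← abs_re_eq_norm.2 (by simp [him]), sub_re]
  rw [← hnorm]
  refine hconv.norm_image_sub_le_of_norm_deriv_le (𝕜 := ℂ) (fun w hw ↦ ?_) (fun w hw ↦ ?_)
    ⟨hs, rfl⟩ ⟨hz, him⟩ <;> obtain ⟨hre, him : w.im = s.im⟩ := hw
  · exact differentiableAt_riemannZeta (ne_one_of_abs_im_pos (by rw [him]; linarith))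
  · rw [← him] at ht ⊢
    exact h.norm_deriv_le w hre.1 hre.2 ht

theorem div_pow_four_le_of_pow_three_le {D a u x y : ℝ} (hD : 1 ≤ D) (ha : 0 < a)
    (hux : u ^ 4 / a ^ 5 ≤ x) (hy : 0 ≤ y) (hxy : x ^ 3 ≤ D * a * y ^ 4) :
    u ^ 3 / D / a ^ 4 ≤ y := by
  refine le_of_pow_le_pow_left₀ four_ne_zero hy ?_
  have hcube : (u ^ 4 / a ^ 5) ^ 3 ≤ D ^ 4 * a * y ^ 4 := by
    calc (u ^ 4 / a ^ 5) ^ 3 ≤ x ^ 3 := by gcongr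
      _ ≤ D * a * y ^ 4 := hxy
      _ ≤ D ^ 4 * a * y ^ 4 := by
        gcongr
        exact le_self_pow₀ hD four_ne_zero
  rw [show (u ^ 3 / D / a ^ 4) ^ 4 = (u ^ 4 / a ^ 5) ^ 3 / (D ^ 4 * a) by field_simp,
    div_le_iff₀ (by positivity)]
  linarith

theorem ZetaUpperBound.le_norm_riemannZeta {D u : ℝ} (h : ZetaUpperBound ε C)
    (hD1 : 1 ≤ D) (hD : ∀ w : ℂ, 1 < w.re → w.re ≤ 5 / 2 → 3 / 2 ≤ |w.im| →
      (w.re - 1) ^ 3 ≤ D * |w.im| ^ ε * ‖riemannZeta w‖ ^ 4)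
    (hε : 0 ≤ ε) (hε' : ε ≤ 1) (hu : 0 < u) (huε : u ^ 4 ≤ ε / 4)
    (huD : 2 * C * u ^ 4 ≤ u ^ 3 / (2 * D)) (ht : 3 / 2 ≤ |s.im|)
    (hs : 1 - u ^ 4 / (|s.im| ^ ε) ^ 5 ≤ s.re) (hs' : s.re ≤ 5 / 2) :
    u ^ 3 / (2 * D) / (|s.im| ^ ε) ^ 4 ≤ ‖riemannZeta s‖ := by
  have hC1 := h.one_le
  set a := |s.im| ^ ε
  have ha1 : 1 ≤ a := Real.one_le_rpow (by linarith) hε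
  set x := u ^ 4 / a ^ 5 with hx
  have hx0 : 0 < x := by positivity
  have hxε : x ≤ ε / 4 := (div_le_self (by positivity) (one_le_pow₀ ha1)).trans huε
  -- Moving `s` to the right edge `1 + x` changes `ζ` by at most half of the 3-4-1 lower bound.
  set w : ℂ := ⟨max s.re (1 + x), s.im⟩ with hw
  have hwre : 1 + x ≤ w.re := le_max_right _ _
  have hw' : w.re ≤ 5 / 2 := max_le hs' (by linarith)
  have hlow : u ^ 3 / D / a ^ 4 ≤ ‖riemannZeta w‖ :=
    div_pow_four_le_of_pow_three_le hD1 (by positivity) (by linarith : x ≤ w.re - 1)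
      (norm_nonneg _) (hD w (by linarith) hw' ht)
  have hmove : ‖riemannZeta w - riemannZeta s‖ ≤ u ^ 3 / (2 * D) / a ^ 4 := by
    have hws : |w.re - s.re| ≤ 2 * x := by
      rw [hw, abs_of_nonneg (sub_nonneg.2 (le_max_left _ _)), sub_le_iff_le_add]
      exact max_le (by linarith) (by linarith)
    calc _ ≤ C * a * |w.re - s.re| :=
          h.norm_sub_le rfl ht ⟨by linarith, hs'⟩ ⟨by linarith, hw'⟩
      _ ≤ C * a * (2 * x) := by gcongr
      _ = (2 * C * u ^ 4) / a ^ 4 := by rw [hx]; field_simp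
      _ ≤ u ^ 3 / (2 * D) / a ^ 4 := by gcongr
  calc u ^ 3 / (2 * D) / a ^ 4 = u ^ 3 / D / a ^ 4 - u ^ 3 / (2 * D) / a ^ 4 := by ring
    _ ≤ ‖riemannZeta s‖ := by linarith [norm_sub_norm_le (riemannZeta w) (riemannZeta s)]

theorem ZetaUpperBound.exists_zetaLowerBound (h : ZetaUpperBound ε C) (hε : 0 < ε) (hε' : ε ≤ 1) :
    ∃ c, ZetaLowerBound ε c := by
  obtain ⟨D, hD1, hD⟩ := h.exists_pow_three_le hε.le hε'
  have hC1 := h.one_le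
  set u := min (1 / (4 * C * D)) (ε / 4)
  have hu0 : 0 < u := by positivity
  have huε : u ≤ ε / 4 := min_le_right _ _
  have hu4 : u ^ 4 ≤ ε / 4 :=
    (pow_le_of_le_one hu0.le (by linarith) four_ne_zero).trans huε
  have huD : 2 * C * u ^ 4 ≤ u ^ 3 / (2 * D) := by
    have : u * (4 * C * D) ≤ 1 := (le_div_iff₀ (by positivity)).1 (min_le_left _ _)
    rw [le_div_iff₀ (by positivity)]
    nlinarith [pow_pos hu0 3]
  refine ⟨min (u ^ 4) (u ^ 3 / (2 * D)), by positivity, (min_le_left _ _).trans hu4,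
    fun s ht hs hs' ↦ ?_⟩
  have hs'' : 1 - u ^ 4 / (|s.im| ^ ε) ^ 5 ≤ s.re := by
    refine hs.trans' (sub_le_sub_left ?_ 1)
    gcongr
    exact min_le_left _ _
  refine le_trans ?_ (h.le_norm_riemannZeta hD1 hD hε.le hε' hu0 hu4 huD ht hs'' hs')
  gcongr
  exact min_le_right _ _

/-- The function `-ζ' / ζ - ζ = ∑ (Λ(n) - 1) n ^ (-s)` measuring the error in the prime number
theorem. It is written through `riemannZeta₁` and `riemannZeta₀` so that the cancelling poles at
`s = 1` do not appear. -/
noncomputable def zetaDefect (s : ℂ) : ℂ :=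
  -deriv riemannZeta₁ s / riemannZeta₁ s - riemannZeta₀ s

theorem riemannZeta₁_ne_zero_iff (hs : s ≠ 1) : riemannZeta₁ s ≠ 0 ↔ riemannZeta s ≠ 0 := by
  rw [riemannZeta₁_eq_mul hs, mul_ne_zero_iff_left (sub_ne_zero.2 hs)]

theorem riemannZeta₁_ne_zero_of_one_le_re (hs : 1 ≤ s.re) : riemannZeta₁ s ≠ 0 := by
  obtain rfl | h := eq_or_ne s 1
  · simp
  · exact (riemannZeta₁_ne_zero_iff h).2 (riemannZeta_ne_zero_of_one_le_re hs)

theorem zetaDefect_eq (hs : s ≠ 1) (hz : riemannZeta s ≠ 0) :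
    zetaDefect s = -deriv riemannZeta s / riemannZeta s - riemannZeta s := by
  have hs1 : s - 1 ≠ 0 := sub_ne_zero.2 hs
  have hz1 : riemannZeta₁ s ≠ 0 := (riemannZeta₁_ne_zero_iff hs).2 hz
  rw [zetaDefect, deriv_riemannZeta_eq_neg_inv_sub_sq_mul_add hs,
    eq_sub_of_add_eq' (riemannZeta_eq_inv_sub_add hs).symm, riemannZeta_eq_inv_sub_mul hs]
  field_simp
  ring

theorem analyticAt_zetaDefect (hs : riemannZeta₁ s ≠ 0) : AnalyticAt ℂ zetaDefect s :=
  ((differentiable_riemannZeta₁.analyticAt s).deriv.neg.div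
    (differentiable_riemannZeta₁.analyticAt s) hs).sub (differentiable_riemannZeta₀.analyticAt s)

theorem exists_norm_iteratedDeriv_zetaDefect_le_of_abs_im_le (j : ℕ) (T : ℝ) :
    ∃ C : ℝ, ∀ s : ℂ, 1 ≤ s.re → s.re ≤ 2 → |s.im| ≤ T → ‖iteratedDeriv j zetaDefect s‖ ≤ C := by
  have hcont : ContinuousOn (iteratedDeriv j zetaDefect) (Set.Icc 1 2 ×ℂ Set.Icc (-T) T) := by
    intro s hs
    rw [iteratedDeriv_eq_iterate]
    exact ((analyticAt_zetaDefect
      (riemannZeta₁_ne_zero_of_one_le_re hs.1.1)).iterated_deriv j).continuousAt.continuousWithinAt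
  obtain ⟨C, hC⟩ := (isCompact_Icc.reProdIm isCompact_Icc).exists_bound_of_continuousOn hcont
  exact ⟨C, fun s h1 h2 ht ↦ hC s ⟨⟨h1, h2⟩, abs_le.1 ht⟩⟩

theorem ZetaLowerBound.zetaDefect_bound_of_mem_closedBall (hc : ZetaLowerBound ε c)
    (hC : ZetaUpperBound ε C) (hε' : ε ≤ 1) (hs : 1 ≤ s.re) (hs' : s.re ≤ 2)
    (ht : 2 ≤ |s.im|) (hz : z ∈ closedBall s (c / (2 * |s.im| ^ ε) ^ 5)) :
    riemannZeta₁ z ≠ 0 ∧ ‖zetaDefect z‖ ≤ (32 * C / c + 2 * C) * (|s.im| ^ ε) ^ 5 := by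
  have hc0 := hc.pos
  have hc1 := hc.le_div_four
  have hC1 := hC.one_le
  set a := |s.im| ^ ε
  have ha1 : 1 ≤ a := Real.one_le_rpow (by linarith) (by linarith)
  have hr : c / (2 * a) ^ 5 ≤ c := div_le_self hc0.le (one_le_pow₀ (by linarith))
  obtain ⟨hre, hre'⟩ := re_mem_Icc_of_mem_closedBall hz
  obtain ⟨him, him'⟩ := abs_im_mem_Icc_of_mem_closedBall hz
  have hza : |z.im| ^ ε ≤ 2 * a :=
    rpow_le_two_mul_rpow (by linarith) hε' (abs_nonneg _) (abs_nonneg _) (by linarith)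
  have hz0 : 0 < |z.im| ^ ε := Real.rpow_pos_of_pos (by linarith) _
  have hlow : c / (2 * a) ^ 4 ≤ ‖riemannZeta z‖ := by
    have hr' : c / (2 * a) ^ 5 ≤ c / (|z.im| ^ ε) ^ 5 := by gcongr
    refine le_trans ?_ (hc.le_norm z (by linarith) (by linarith) (by linarith))
    gcongr
  have hup : ‖riemannZeta z‖ ≤ C * (2 * a) :=
    (hC.norm_le z (by linarith) (by linarith) (by linarith)).trans (by gcongr)
  have hup' : ‖deriv riemannZeta z‖ ≤ C * (2 * a) :=
    (hC.norm_deriv_le z (by linarith) (by linarith) (by linarith)).trans (by gcongr)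
  have hz1 : z ≠ 1 := ne_one_of_abs_im_pos (by linarith)
  have hne : riemannZeta z ≠ 0 := norm_pos_iff.1 (hlow.trans_lt' (by positivity))
  refine ⟨(riemannZeta₁_ne_zero_iff hz1).2 hne, ?_⟩
  calc ‖zetaDefect z‖ ≤ ‖deriv riemannZeta z‖ / ‖riemannZeta z‖ + ‖riemannZeta z‖ := by
        rw [zetaDefect_eq hz1 hne, ← norm_neg (deriv riemannZeta z), ← norm_div]
        exact norm_sub_le _ _
    _ ≤ C * (2 * a) / (c / (2 * a) ^ 4) + C * (2 * a) := by gcongr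
    _ = 32 * C / c * a ^ 5 + 2 * C * a := by field_simp; ring
    _ ≤ 32 * C / c * a ^ 5 + 2 * C * a ^ 5 := by
      gcongr
      exact le_self_pow₀ ha1 (by norm_num)
    _ = _ := by ring

theorem ZetaLowerBound.norm_iteratedDeriv_zetaDefect_le (hc : ZetaLowerBound ε c)
    (hC : ZetaUpperBound ε C) (hε' : ε ≤ 1) (j : ℕ) (hs : 1 ≤ s.re) (hs' : s.re ≤ 2)
    (ht : 2 ≤ |s.im|) : ‖iteratedDeriv j zetaDefect s‖ ≤
      j.factorial * (32 * C / c + 2 * C) * (32 / c) ^ j * |s.im| ^ (ε * (5 * j + 5)) := by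
  have hc0 := hc.pos
  have ht0 : 0 < |s.im| := by linarith
  set a := |s.im| ^ ε with ha
  have ha0 : 0 < a := by positivity
  have hr0 : 0 < c / (2 * a) ^ 5 := by positivity
  have hball : ∀ z ∈ closedBall s (c / (2 * a) ^ 5),
      riemannZeta₁ z ≠ 0 ∧ ‖zetaDefect z‖ ≤ (32 * C / c + 2 * C) * a ^ 5 := fun z hz ↦
    hc.zetaDefect_bound_of_mem_closedBall hC hε' hs hs' ht hz
  have hdiff : DiffContOnCl ℂ zetaDefect (ball s (c / (2 * a) ^ 5)) := by
    refine DifferentiableOn.diffContOnCl fun z hz ↦ ?_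
    rw [closure_ball _ hr0.ne'] at hz
    exact (analyticAt_zetaDefect (hball z hz).1).differentiableAt.differentiableWithinAt
  have hpow : |s.im| ^ (ε * (5 * j + 5)) = a ^ (5 * j + 5) := by
    rw [ha, ← Real.rpow_natCast, ← Real.rpow_mul ht0.le]
    push_cast
    rfl
  refine (norm_iteratedDeriv_le_of_forall_mem_sphere_norm_le j hr0 hdiff
    fun z hz ↦ (hball z (sphere_subset_closedBall hz)).2).trans_eq ?_
  rw [hpow, pow_add, pow_mul, div_pow, div_pow, mul_pow, mul_pow]
  field_simp
  norm_num

theorem exists_norm_iteratedDeriv_zetaDefect_le (j : ℕ) :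
    ∃ C : ℝ, 0 < C ∧ ∀ s : ℂ, 1 ≤ s.re → s.re ≤ 2 →
      ‖iteratedDeriv j zetaDefect s‖ ≤ C * (1 + |s.im|) := by
  -- The bound above loses `|s.im| ^ (ε * (5 * j + 5))`, which this `ε` makes linear.
  set ε : ℝ := 1 / (5 * j + 5) with hε
  have hε0 : 0 < ε := by positivity
  have hε1 : ε ≤ 1 := div_le_one_of_le₀ (by linarith [j.cast_nonneg (α := ℝ)]) (by positivity)
  obtain ⟨B, hB⟩ := exists_norm_iteratedDeriv_zetaDefect_le_of_abs_im_le j 2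
  obtain ⟨C, hC⟩ := exists_zetaUpperBound hε0 hε1
  obtain ⟨c, hc⟩ := hC.exists_zetaLowerBound hε0 hε1
  have hc0 := hc.pos
  have hC1 := hC.one_le
  set D : ℝ := j.factorial * (32 * C / c + 2 * C) * (32 / c) ^ j with hD
  have hD0 : 0 < D := by positivity
  refine ⟨|B| + D, by positivity, fun s h1 h2 ↦ ?_⟩
  have ht0 := abs_nonneg s.im
  have hB0 := abs_nonneg B
  obtain ht | ht := le_total |s.im| 2
  · have := hB s h1 h2 ht
    nlinarith [le_abs_self B]
  · have := hc.norm_iteratedDeriv_zetaDefect_le hC hε1 j h1 h2 ht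
    rw [hε, one_div_mul_cancel (by positivity), Real.rpow_one, ← hD] at this
    nlinarith

end ZetaLowerBound

/-! ### Primes in short intervals -/

section ShortIntervals

open Filter Topology MeasureTheory FourierTransform LSeries Real
open ArithmeticFunction (vonMangoldt vonMangoldt_nonneg LSeriesSummable_vonMangoldt
  LSeries_vonMangoldt_eq_deriv_riemannZeta_div)

/-- The coefficients `Λ(n) - 1` of the Dirichlet series of `zetaDefect`. -/
noncomputable def vonMangoldtSubOne (n : ℕ) : ℂ := (vonMangoldt n : ℂ) - 1

theorem LSeriesSummable_vonMangoldtSubOne {s : ℂ} (hs : 1 < s.re) :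
    LSeriesSummable vonMangoldtSubOne s :=
  (LSeriesSummable_vonMangoldt hs).sub (LSeriesSummable_one_iff.2 hs)

theorem LSeries_vonMangoldtSubOne {s : ℂ} (hs : 1 < s.re) :
    LSeries vonMangoldtSubOne s = zetaDefect s := by
  have hs1 : s ≠ 1 := by rintro rfl; simp at hs
  rw [zetaDefect_eq hs1 (riemannZeta_ne_zero_of_one_le_re hs.le),
    ← LSeries_vonMangoldt_eq_deriv_riemannZeta_div hs, ← LSeries_one_eq_riemannZeta hs]
  exact LSeries_sub (LSeriesSummable_vonMangoldt hs) (LSeriesSummable_one_iff.2 hs)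

theorem abscissaOfAbsConv_vonMangoldtSubOne_lt {s : ℂ} (hs : 1 < s.re) :
    abscissaOfAbsConv vonMangoldtSubOne < s.re := by
  have hle : abscissaOfAbsConv vonMangoldtSubOne ≤ 1 :=
    abscissaOfAbsConv_le_of_forall_lt_LSeriesSummable fun y hy ↦
      LSeriesSummable_vonMangoldtSubOne (by simpa using hy)
  exact hle.trans_lt (by exact_mod_cast hs)

theorem LSeriesSummable_iterate_logMul_vonMangoldtSubOne (j : ℕ) {s : ℂ} (hs : 1 < s.re) :
    LSeriesSummable (logMul^[j] vonMangoldtSubOne) s := by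
  apply LSeriesSummable_of_abscissaOfAbsConv_lt_re
  rw [absicssaOfAbsConv_logPowMul]
  exact abscissaOfAbsConv_vonMangoldtSubOne_lt hs

theorem exists_norm_LSeries_iterate_logMul_vonMangoldtSubOne_le (j : ℕ) :
    ∃ C : ℝ, 0 < C ∧ ∀ s : ℂ, 1 < s.re → s.re ≤ 2 →
      ‖LSeries (logMul^[j] vonMangoldtSubOne) s‖ ≤ C * (1 + |s.im|) := by
  obtain ⟨C, hC, h⟩ := exists_norm_iteratedDeriv_zetaDefect_le j
  refine ⟨C, hC, fun s h1 h2 ↦ ?_⟩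
  have heq : LSeries vonMangoldtSubOne =ᶠ[𝓝 s] zetaDefect := by
    filter_upwards [(isOpen_lt continuous_const Complex.continuous_re).mem_nhds h1] with z hz
      using LSeries_vonMangoldtSubOne hz
  have hderiv := LSeries_iteratedDeriv j (abscissaOfAbsConv_vonMangoldtSubOne_lt h1)
  rw [heq.iteratedDeriv_eq] at hderiv
  simpa [hderiv] using h s h1.le h2

theorem iterate_logMul_apply (j : ℕ) (f : ℕ → ℂ) (n : ℕ) :
    logMul^[j] f n = (log n : ℂ) ^ j * f n := by
  induction j generalizing f with
  | zero => simp
  | succ j ih =>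
    rw [Function.iterate_succ_apply, ih, logMul, pow_succ, Complex.natCast_log, mul_assoc]

theorem schwartzMap_apply_eq_integral_fourier (w : SchwartzMap ℝ ℂ) (v : ℝ) :
    w v = ∫ ξ : ℝ, Complex.exp ((2 * π * (ξ * v) : ℝ) * Complex.I) * (𝓕 w) ξ := by
  have hw : 𝓕⁻ (𝓕 w) = w := by simp
  conv_lhs => rw [← hw]
  rw [SchwartzMap.fourierInv_coe, Real.fourierInv_eq']
  simp [mul_comm v]

theorem LSeries_term_sub_mul_I (f : ℕ → ℂ) (s : ℂ) (τ : ℝ) (n : ℕ) :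
    term f (s - τ * Complex.I) n = term f s n * Complex.exp ((τ * log n : ℝ) * Complex.I) := by
  obtain rfl | hn := eq_or_ne n 0
  · simp
  have hn' : (n : ℂ) ≠ 0 := Nat.cast_ne_zero.2 hn
  rw [term_of_ne_zero hn, term_of_ne_zero hn, Complex.cpow_sub _ _ hn',
    Complex.cpow_def_of_ne_zero hn' (τ * Complex.I), Complex.ofReal_mul, Complex.natCast_log,
    mul_right_comm (τ : ℂ), mul_comm (τ * Complex.I)]
  field_simp

theorem tsum_term_mul_schwartzMap_eq_integral (w : SchwartzMap ℝ ℂ) {f : ℕ → ℂ} {s : ℂ}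
    (hf : LSeriesSummable f s) (L δ : ℝ) :
    ∑' n, term f s n * w ((log n - L) / δ) =
      ∫ ξ : ℝ, LSeries f (s - (2 * π * ξ / δ : ℝ) * Complex.I) *
        (Complex.exp ((-(2 * π * ξ / δ * L) : ℝ) * Complex.I) * (𝓕 w) ξ) := by
  set F : ℕ → ℝ → ℂ := fun n ξ ↦ term f s n *
    (Complex.exp ((2 * π * (ξ * ((log n - L) / δ)) : ℝ) * Complex.I) * (𝓕 w) ξ) with hF
  have hint (n : ℕ) : Integrable (F n) := by
    refine Integrable.const_mul (((𝓕 w).integrable (μ := volume)).bdd_mul (c := 1)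
      (by fun_prop) (.of_forall fun ξ ↦ ?_)) _
    rw [Complex.norm_exp_ofReal_mul_I]
  have hsum : Summable fun n ↦ ∫ ξ, ‖F n ξ‖ := by
    simp_rw [hF, norm_mul, Complex.norm_exp_ofReal_mul_I, one_mul, integral_const_mul]
    exact hf.norm.mul_right _
  calc ∑' n, term f s n * w ((log n - L) / δ) = ∑' n, ∫ ξ, F n ξ := by
        simp_rw [hF, integral_const_mul, ← schwartzMap_apply_eq_integral_fourier]
    _ = ∫ ξ, ∑' n, F n ξ := integral_tsum_of_summable_integral_norm hint hsum
    _ = _ := by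
      congr 1 with ξ
      rw [LSeries, ← tsum_mul_right]
      congr 1 with n
      have hexp : (2 * π * (ξ * ((log n - L) / δ)) : ℝ) * Complex.I =
          (2 * π * ξ / δ * log n : ℝ) * Complex.I + (-(2 * π * ξ / δ * L) : ℝ) * Complex.I := by
        push_cast
        ring
      rw [LSeries_term_sub_mul_I, hF]
      simp only
      rw [hexp, Complex.exp_add]
      ring

theorem exists_norm_tsum_term_mul_schwartzMap_le (w : SchwartzMap ℝ ℂ) :
    ∃ K : ℝ, ∀ (f : ℕ → ℂ) (s : ℂ) (C L δ : ℝ), 0 < C → 0 < δ → δ ≤ 1 →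
      LSeriesSummable f s →
      (∀ τ : ℝ, ‖LSeries f (s - τ * Complex.I)‖ ≤ C * (1 + |τ|)) →
      ‖∑' n, term f s n * w ((log n - L) / δ)‖ ≤ C * K / δ := by
  refine ⟨∫ ξ : ℝ, (1 + 2 * π * |ξ|) * ‖(𝓕 w) ξ‖, fun f s C L δ hC hδ hδ1 hf hbound ↦ ?_⟩
  have hint : Integrable fun ξ : ℝ ↦ (1 + 2 * π * |ξ|) * ‖(𝓕 w) ξ‖ := by
    have h0 : Integrable fun ξ : ℝ ↦ ‖(𝓕 w) ξ‖ := (𝓕 w).integrable.norm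
    have h1 : Integrable fun ξ : ℝ ↦ ‖ξ‖ ^ 1 * ‖(𝓕 w) ξ‖ := (𝓕 w).integrable_pow_mul volume 1
    exact (h0.add (h1.const_mul (2 * π))).congr (.of_forall fun ξ ↦ by simp; ring)
  have hle (ξ : ℝ) : ‖LSeries f (s - (2 * π * ξ / δ : ℝ) * Complex.I) *
      (Complex.exp ((-(2 * π * ξ / δ * L) : ℝ) * Complex.I) * (𝓕 w) ξ)‖ ≤
      C / δ * ((1 + 2 * π * |ξ|) * ‖(𝓕 w) ξ‖) := by
    rw [norm_mul, norm_mul, Complex.norm_exp_ofReal_mul_I, one_mul, ← mul_assoc]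
    gcongr
    calc _ ≤ C * (1 + |2 * π * ξ / δ|) := hbound _
      _ = C * (1 + 2 * π * |ξ| / δ) := by
        rw [abs_div, abs_mul, abs_of_pos hδ, abs_of_pos two_pi_pos]
      _ ≤ C * (1 / δ + 2 * π * |ξ| / δ) := by
        gcongr
        exact (one_le_div₀ hδ).2 hδ1
      _ = C / δ * (1 + 2 * π * |ξ|) := by ring
  rw [tsum_term_mul_schwartzMap_eq_integral w hf]
  refine (norm_integral_le_of_norm_le (hint.const_mul _) (.of_forall hle)).trans_eq ?_
  rw [integral_const_mul]
  ring

/-- A smooth bump function supported in `[0, 1]` and equal to `1` on `[1/4, 3/4]`. -/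
noncomputable def windowBump : ContDiffBump (1 / 2 : ℝ) := ⟨1 / 4, 1 / 2, by norm_num, by norm_num⟩

theorem windowBump_eq_one {v : ℝ} (hv : v ∈ Set.Icc (1 / 4) (3 / 4)) : windowBump v = 1 := by
  apply windowBump.one_of_mem_closedBall
  rw [mem_closedBall_iff_norm, norm_eq_abs, abs_le]
  constructor <;> simp only [windowBump] <;> linarith [hv.1, hv.2]

theorem mem_Ioo_of_windowBump_ne_zero {v : ℝ} (hv : windowBump v ≠ 0) : v ∈ Set.Ioo 0 1 := by
  have hdist : dist v (1 / 2) < 1 / 2 := not_le.1 fun h ↦ hv (windowBump.zero_of_le_dist h)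
  rw [dist_eq, abs_lt] at hdist
  constructor <;> linarith

/-- `windowBump` as a complex-valued Schwartz function. -/
noncomputable def windowSchwartz : SchwartzMap ℝ ℂ :=
  HasCompactSupport.toSchwartzMap (f := fun v ↦ (windowBump v : ℂ))
    (windowBump.hasCompactSupport.comp_left Complex.ofReal_zero)
    (Complex.ofRealCLM.contDiff.comp windowBump.contDiff)

/-- The weight `(log n) ^ j / n ^ (1 + 1 / L)`, cut off smoothly to `L < log n < L + δ`. -/
noncomputable def windowWeight (j : ℕ) (L δ : ℝ) (n : ℕ) : ℝ :=
  log n ^ j * (n : ℝ) ^ (-(1 + 1 / L)) * windowBump ((log n - L) / δ)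

variable {j : ℕ} {L δ : ℝ} {n : ℕ}

theorem windowWeight_nonneg : 0 ≤ windowWeight j L δ n := by
  have := log_natCast_nonneg n
  have := windowBump.nonneg (x := (log n - L) / δ)
  unfold windowWeight
  positivity

theorem log_mem_Ioo_of_windowWeight_ne_zero (hδ : 0 < δ) (hn : windowWeight j L δ n ≠ 0) :
    log n ∈ Set.Ioo L (L + δ) := by
  obtain ⟨h0, h1⟩ := mem_Ioo_of_windowBump_ne_zero (right_ne_zero_of_mul hn)
  rw [div_lt_one hδ] at h1
  have := (div_pos_iff_of_pos_right hδ).1 h0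
  constructor <;> linarith

theorem mem_Ioc_of_windowWeight_ne_zero (hL : 0 ≤ L) (hδ : 0 < δ) (hδ1 : δ ≤ 1)
    (hn : windowWeight j L δ n ≠ 0) : n ∈ Finset.Ioc 0 ⌊3 * exp L⌋₊ := by
  obtain ⟨h0, h1⟩ := log_mem_Ioo_of_windowWeight_ne_zero hδ hn
  have hn0 : 0 < n := Nat.pos_of_ne_zero fun h ↦ by simp [h] at h0; linarith
  refine Finset.mem_Ioc.2 ⟨hn0, Nat.le_floor ?_⟩
  calc (n : ℝ) = exp (log n) := (exp_log (by positivity)).symm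
    _ ≤ exp (1 + L) := by gcongr; linarith
    _ = exp 1 * exp L := exp_add ..
    _ ≤ 3 * exp L := by gcongr; exact exp_one_lt_three.le

theorem windowWeight_le (hδ : 0 < δ) (hδL : δ ≤ L) :
    windowWeight j L δ n ≤ (2 * L) ^ j / exp L := by
  have : 0 ≤ L := by linarith
  by_cases hn : windowWeight j L δ n = 0
  · rw [hn]
    positivity
  obtain ⟨h0, h1⟩ := log_mem_Ioo_of_windowWeight_ne_zero hδ hn
  have hn0 : 0 < n := Nat.pos_of_ne_zero fun h ↦ by simp [h] at h0; linarith
  have hpow : (n : ℝ) ^ (-(1 + 1 / L)) ≤ (exp L)⁻¹ := by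
    rw [rpow_def_of_pos (by positivity), ← exp_neg]
    gcongr
    have : 0 ≤ log n * (1 / L) := mul_nonneg (by linarith) (one_div_nonneg.2 (by linarith))
    linarith
  have hlog : log n ^ j ≤ (2 * L) ^ j := pow_le_pow_left₀ (by linarith) (by linarith) j
  calc windowWeight j L δ n ≤ (2 * L) ^ j * (exp L)⁻¹ * 1 := by
        unfold windowWeight
        gcongr
        · exact windowBump.nonneg
        · exact windowBump.le_one
    _ = (2 * L) ^ j / exp L := by ring

theorem le_windowWeight (hL : 1 ≤ L) (hδ : 0 < δ) (hδ1 : δ ≤ 1)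
    (hn : log n ∈ Set.Icc (L + δ / 4) (L + 3 * δ / 4)) :
    L ^ j / (27 * exp L) ≤ windowWeight j L δ n := by
  obtain ⟨h0, h1⟩ := hn
  have hn0 : 0 < n := Nat.pos_of_ne_zero fun h ↦ by simp [h] at h0; linarith
  have hbump : windowBump ((log n - L) / δ) = 1 := by
    refine windowBump_eq_one ⟨?_, ?_⟩
    · rw [le_div_iff₀ hδ]; linarith
    · rw [div_le_iff₀ hδ]; linarith
  have hpow : (27 * exp L)⁻¹ ≤ (n : ℝ) ^ (-(1 + 1 / L)) := by
    have hlog : log n * (1 + 1 / L) ≤ 3 + L := by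
      calc log n * (1 + 1 / L) ≤ (L + 1) * (1 + 1 / L) := by gcongr; linarith
        _ = L + 2 + 1 / L := by field_simp; ring
        _ ≤ 3 + L := by linarith [(div_le_one₀ (by linarith)).2 hL]
    calc (27 * exp L)⁻¹ = ((3 : ℝ) ^ 3 * exp L)⁻¹ := by norm_num
      _ ≤ (exp 1 ^ 3 * exp L)⁻¹ := by gcongr; exact exp_one_lt_three.le
      _ = exp (-(3 + L)) := by rw [← exp_nat_mul, ← exp_add, ← exp_neg]; norm_num
      _ ≤ exp (log n * -(1 + 1 / L)) := by gcongr; linarith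
      _ = (n : ℝ) ^ (-(1 + 1 / L)) := (rpow_def_of_pos (by positivity) _).symm
  calc L ^ j / (27 * exp L) = L ^ j * (27 * exp L)⁻¹ * 1 := by ring
    _ ≤ windowWeight j L δ n := by
      rw [windowWeight, hbump]
      gcongr
      linarith

theorem term_iterate_logMul_mul_windowSchwartz (hL : 0 < L) :
    term (logMul^[j] vonMangoldtSubOne) ((1 + 1 / L : ℝ) : ℂ) n * windowSchwartz ((log n - L) / δ)
      = (windowWeight j L δ n * (vonMangoldt n - 1) : ℝ) := by
  obtain rfl | hn := eq_or_ne n 0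
  · have : -(1 + 1 / L) ≠ 0 := neg_ne_zero.2 (by positivity)
    rw [term_zero, windowWeight, Nat.cast_zero, zero_rpow this]
    simp
  rw [term_of_ne_zero hn, iterate_logMul_apply, vonMangoldtSubOne, windowWeight,
    rpow_neg (by positivity)]
  push_cast [Complex.ofReal_cpow (n.cast_nonneg (α := ℝ))]
  rw [show windowSchwartz ((log n - L) / δ) = (windowBump ((log n - L) / δ) : ℂ) from rfl]
  ring

theorem tsum_term_mul_windowSchwartz (hL : 0 < L) (hδ : 0 < δ) (hδ1 : δ ≤ 1) :
    ∑' n, term (logMul^[j] vonMangoldtSubOne) ((1 + 1 / L : ℝ) : ℂ) n *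
      windowSchwartz ((log n - L) / δ) =
      (∑ n ∈ Finset.Ioc 0 ⌊3 * exp L⌋₊, windowWeight j L δ n * (vonMangoldt n - 1) : ℝ) := by
  simp_rw [term_iterate_logMul_mul_windowSchwartz hL, ← Complex.ofReal_tsum]
  rw [tsum_eq_sum fun n hn ↦ ?_]
  rw [not_imp_comm.1 (mem_Ioc_of_windowWeight_ne_zero hL.le hδ hδ1) hn, zero_mul]

theorem le_card_Ioc_floor_exp (hδ : 0 < δ) (hLδ : 4 ≤ exp L * δ) :
    exp L * δ / 4 ≤ (Finset.Ioc ⌊exp (L + δ / 4)⌋₊ ⌊exp (L + 3 * δ / 4)⌋₊).card := by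
  have hgap : exp (L + δ / 4) + exp L * δ / 2 ≤ exp (L + 3 * δ / 4) := by
    have h1 : δ / 2 + 1 ≤ exp (δ / 2) := add_one_le_exp _
    have h2 : exp L ≤ exp (L + δ / 4) := by gcongr; linarith
    rw [show L + 3 * δ / 4 = L + δ / 4 + δ / 2 by ring, exp_add _ (δ / 2)]
    nlinarith [exp_pos L]
  have hfloor := Nat.floor_le (exp_pos (L + δ / 4)).le
  have hfloor' := Nat.lt_floor_add_one (exp (L + 3 * δ / 4))
  rw [Nat.card_Ioc, Nat.cast_sub (Nat.floor_le_floor (by nlinarith))]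
  linarith

theorem le_sum_windowWeight (hL : 1 ≤ L) (hδ : 0 < δ) (hδ1 : δ ≤ 1) (hLδ : 4 ≤ exp L * δ) :
    L ^ j * δ / 108 ≤ ∑ n ∈ Finset.Ioc 0 ⌊3 * exp L⌋₊, windowWeight j L δ n := by
  set T := Finset.Ioc ⌊exp (L + δ / 4)⌋₊ ⌊exp (L + 3 * δ / 4)⌋₊
  have hlow : ∀ n ∈ T, L ^ j / (27 * exp L) ≤ windowWeight j L δ n := by
    intro n hn
    obtain ⟨h0, h1⟩ := Finset.mem_Ioc.1 hn
    have hn0 : (0 : ℝ) < n := by exact_mod_cast h0.pos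
    exact le_windowWeight hL hδ hδ1 ⟨(le_log_iff_exp_le hn0).2 (Nat.lt_of_floor_lt h0).le,
      (log_le_iff_le_exp hn0).2 ((Nat.le_floor_iff (exp_pos _).le).1 h1)⟩
  have hsub : T ⊆ Finset.Ioc 0 ⌊3 * exp L⌋₊ := by
    refine Finset.Ioc_subset_Ioc (Nat.zero_le _) (Nat.floor_le_floor ?_)
    calc exp (L + 3 * δ / 4) ≤ exp (1 + L) := exp_le_exp.2 (by linarith)
      _ = exp 1 * exp L := exp_add ..
      _ ≤ 3 * exp L := by gcongr; exact exp_one_lt_three.le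
  calc L ^ j * δ / 108 = exp L * δ / 4 * (L ^ j / (27 * exp L)) := by field_simp; norm_num
    _ ≤ T.card * (L ^ j / (27 * exp L)) := by
      gcongr
      exact le_card_Ioc_floor_exp hδ hLδ
    _ = T.card • (L ^ j / (27 * exp L)) := (nsmul_eq_mul ..).symm
    _ ≤ ∑ n ∈ T, windowWeight j L δ n := Finset.card_nsmul_le_sum _ _ _ hlow
    _ ≤ _ := Finset.sum_le_sum_of_subset_of_nonneg hsub fun _ _ _ ↦ windowWeight_nonneg

theorem sum_windowWeight_mul_vonMangoldt_le (hδ : 0 < δ) (hδL : δ ≤ L)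
    (hprime : ∀ p : ℕ, p.Prime → log p ∉ Set.Ioo L (L + δ)) :
    ∑ n ∈ Finset.Ioc 0 ⌊3 * exp L⌋₊, windowWeight j L δ n * vonMangoldt n ≤
      (2 * L) ^ j / exp L * (Chebyshev.psi (3 * exp L) - Chebyshev.theta (3 * exp L)) := by
  rw [Chebyshev.psi_sub_theta_eq_sum_not_prime, Finset.sum_filter, Finset.mul_sum]
  refine Finset.sum_le_sum fun n _ ↦ ?_
  split_ifs with hn
  · rw [not_imp_comm.1 (log_mem_Ioo_of_windowWeight_ne_zero hδ) (hprime n hn)]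
    simp
  · exact mul_le_mul_of_nonneg_right (windowWeight_le hδ hδL) vonMangoldt_nonneg

theorem exists_abs_sum_windowWeight_mul_vonMangoldt_sub_le (j : ℕ) :
    ∃ M : ℝ, ∀ L δ : ℝ, 1 ≤ L → 0 < δ → δ ≤ 1 →
      |∑ n ∈ Finset.Ioc 0 ⌊3 * exp L⌋₊, windowWeight j L δ n * vonMangoldt n -
        ∑ n ∈ Finset.Ioc 0 ⌊3 * exp L⌋₊, windowWeight j L δ n| ≤ M / δ := by
  obtain ⟨K, hK⟩ := exists_norm_tsum_term_mul_schwartzMap_le windowSchwartz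
  obtain ⟨C, hC0, hC⟩ := exists_norm_LSeries_iterate_logMul_vonMangoldtSubOne_le j
  refine ⟨C * K, fun L δ hL hδ hδ1 ↦ ?_⟩
  have hLinv : 1 / L ≤ 1 := (div_le_one₀ (by linarith)).2 hL
  have hLinv0 : 0 < 1 / L := by positivity
  have hsmooth := hK (logMul^[j] vonMangoldtSubOne) ((1 + 1 / L : ℝ) : ℂ) C L δ hC0 hδ hδ1
    (LSeriesSummable_iterate_logMul_vonMangoldtSubOne j (by rw [Complex.ofReal_re]; linarith))
    fun τ ↦ by
      simpa using hC (((1 + 1 / L : ℝ) : ℂ) - τ * Complex.I) (by simp; linarith)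
        (by simpa using (by linarith : 1 + 1 / L ≤ 2))
  rwa [tsum_term_mul_windowSchwartz (by linarith) hδ hδ1, Complex.norm_real, norm_eq_abs,
    Finset.sum_congr rfl fun n _ ↦ mul_sub_one (windowWeight j L δ n) _,
    Finset.sum_sub_distrib] at hsmooth

theorem eventually_pow_div_exp_mul_sqrt_le (j : ℕ) (C : ℝ) :
    ∀ᶠ L : ℝ in atTop, (2 * L) ^ j / exp L * (C * √(3 * exp L)) ≤ 1 := by
  have hlim : Tendsto (fun L : ℝ ↦ C * √3 * 4 ^ j * ((L / 2) ^ j * exp (-(L / 2)))) atTop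
      (𝓝 0) := by
    simpa using ((tendsto_pow_mul_exp_neg_atTop_nhds_zero j).comp
      (tendsto_id.atTop_div_const two_pos)).const_mul (C * √3 * 4 ^ j)
  filter_upwards [hlim.eventually_le_const one_pos] with L hL
  refine le_of_eq_of_le ?_ hL
  have hexp : exp L = exp (L / 2) ^ 2 := by rw [← exp_nat_mul]; congr 1; push_cast; ring
  have hpow : (2 * L) ^ j = 4 ^ j * (L / 2) ^ j := by rw [← mul_pow]; congr 1; ring
  rw [sqrt_mul (by norm_num), hexp, sqrt_sq (exp_pos _).le, exp_neg, hpow]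
  field_simp

theorem eventually_exists_prime_log_mem_Ioo (A : ℕ) :
    ∀ᶠ L : ℝ in atTop, ∃ p : ℕ, p.Prime ∧ log p ∈ Set.Ioo L (L + 1 / L ^ A) := by
  -- With `j = 2 * A + 1` the smooth sum of `1` is of order `L ^ (A + 1)`, that of `Λ - 1` only
  -- `O(L ^ A)`.
  set j := 2 * A + 1
  obtain ⟨M, hM⟩ := exists_abs_sum_windowWeight_mul_vonMangoldt_sub_le j
  obtain ⟨B, hB⟩ := Chebyshev.psi_sub_theta_le_mul_sqrt
  filter_upwards [(tendsto_pow_mul_exp_neg_atTop_nhds_zero A).eventually_le_const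
      (by norm_num : (0 : ℝ) < 1 / 4), eventually_pow_div_exp_mul_sqrt_le j B,
    eventually_gt_atTop (108 * (M + 1)), eventually_ge_atTop 1] with L hexp hrest hLM hL
  by_contra! hprime
  set δ := 1 / L ^ A with hδ
  have hLA : 1 ≤ L ^ A := one_le_pow₀ hL
  have hδ0 : 0 < δ := by positivity
  have hδ1 : δ ≤ 1 := (div_le_one₀ (by positivity)).2 hLA
  have hLδ : 4 ≤ exp L * δ := by
    rw [exp_neg, ← div_eq_mul_inv, div_le_div_iff₀ (exp_pos L) (by norm_num)] at hexp
    rw [hδ, mul_one_div, le_div_iff₀ (by positivity)]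
    linarith
  have hmain := le_sum_windowWeight (j := j) hL hδ0 hδ1 hLδ
  have hΛ := (sum_windowWeight_mul_vonMangoldt_le (j := j) hδ0 (hδ1.trans hL) hprime).trans
    ((mul_le_mul_of_nonneg_left (hB _) (by positivity)).trans hrest)
  have hle : L * L ^ A / 108 ≤ M * L ^ A + 1 := by
    calc L * L ^ A / 108 = L ^ j * δ / 108 := by rw [hδ]; field_simp; ring
      _ ≤ M / δ + 1 := by linarith [neg_le_of_abs_le (hM L δ hL hδ0 hδ1)]
      _ = M * L ^ A + 1 := by rw [hδ]; field_simp
  nlinarith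

end ShortIntervals

/-! ### Selberg's upper bound for primes in an interval -/

section SelbergSieve

open Finset Real
open scoped ArithmeticFunction.Moebius Nat

theorem abs_card_filter_dvd_Ioc_sub_div_le (a h : ℕ) {m : ℕ} (hm : 0 < m) :
    |(#{n ∈ Ioc a (a + h) | m ∣ n} : ℝ) - h / m| ≤ 1 := by
  have hcard : #{n ∈ Ioc a (a + h) | m ∣ n} + a / m = (a + h) / m := by
    rw [← Nat.Ioc_filter_dvd_card_eq_div (a + h), ← Nat.Ioc_filter_dvd_card_eq_div a, add_comm,
      ← card_union_of_disjoint, ← filter_union, Ioc_union_Ioc_eq_Ioc a.zero_le (by lia)]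
    exact disjoint_filter_filter (Ioc_disjoint_Ioc_of_le le_rfl)
  have hcard' : (#{n ∈ Ioc a (a + h) | m ∣ n} : ℝ) + ↑(a / m) = ↑((a + h) / m) := by
    exact_mod_cast hcard
  have hm' : (0 : ℝ) < m := by exact_mod_cast hm
  have hlower (n : ℕ) : (n : ℝ) / m < ↑(n / m) + 1 := by
    rw [div_lt_iff₀' hm']
    exact_mod_cast Nat.lt_mul_div_succ n hm
  have hupper (n : ℕ) : (↑(n / m) : ℝ) ≤ n / m := Nat.cast_div_le
  have hah : ((a + h : ℕ) : ℝ) / m = a / m + h / m := by rw [Nat.cast_add, add_div]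
  rw [abs_le]
  constructor <;> linarith [hlower a, hupper a, hlower (a + h), hupper (a + h)]

theorem sum_Ioc_sq_sum_filter_dvd_le (a h : ℕ) {T : Finset ℕ} (hT : ∀ d ∈ T, 0 < d) (b : ℕ → ℝ) :
    ∑ n ∈ Ioc a (a + h), (∑ d ∈ T with d ∣ n, b d) ^ 2 ≤
      h * ∑ d ∈ T, ∑ d' ∈ T, b d * b d' / d.lcm d' + (∑ d ∈ T, |b d|) ^ 2 := by
  have hsq (n : ℕ) : (∑ d ∈ T with d ∣ n, b d) ^ 2 =
      ∑ d ∈ T, ∑ d' ∈ T, if d.lcm d' ∣ n then b d * b d' else 0 := by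
    simp_rw [sq, sum_filter, sum_mul_sum, Nat.lcm_dvd_iff, ite_and, ite_mul, mul_ite, zero_mul,
      mul_zero, ite_self]
  have hterm {d d' : ℕ} (hd : d ∈ T) (hd' : d' ∈ T) :
      ∑ n ∈ Ioc a (a + h), (if d.lcm d' ∣ n then b d * b d' else 0) ≤
        h * (b d * b d' / d.lcm d') + |b d| * |b d'| := by
    have hcount := abs_card_filter_dvd_Ioc_sub_div_le a h (Nat.lcm_pos (hT d hd) (hT d' hd'))
    rw [← sum_filter, sum_const, nsmul_eq_mul]
    set N := (#{n ∈ Ioc a (a + h) | d.lcm d' ∣ n} : ℝ)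
    calc N * (b d * b d') = h * (b d * b d' / d.lcm d') + b d * b d' * (N - h / d.lcm d') := by ring
      _ ≤ h * (b d * b d' / d.lcm d') + |b d| * |b d'| := by
        rw [← abs_mul]
        gcongr
        refine (le_abs_self _).trans ?_
        rw [abs_mul]
        exact mul_le_of_le_one_right (abs_nonneg _) hcount
  calc ∑ n ∈ Ioc a (a + h), (∑ d ∈ T with d ∣ n, b d) ^ 2
      = ∑ d ∈ T, ∑ d' ∈ T, ∑ n ∈ Ioc a (a + h), if d.lcm d' ∣ n then b d * b d' else 0 := by
        simp_rw [hsq]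
        rw [sum_comm]
        exact sum_congr rfl fun _ _ ↦ sum_comm
    _ ≤ ∑ d ∈ T, ∑ d' ∈ T, (h * (b d * b d' / d.lcm d') + |b d| * |b d'|) :=
        sum_le_sum fun _ hd ↦ sum_le_sum fun _ hd' ↦ hterm hd hd'
    _ = _ := by simp_rw [sum_add_distrib, ← mul_sum, sq, sum_mul_sum, mul_sum]

theorem gcd_eq_sum_Icc_totient {d d' z : ℕ} (hd : 0 < d) (hdz : d ≤ z) :
    d.gcd d' = ∑ e ∈ Icc 1 z, if e ∣ d ∧ e ∣ d' then φ e else 0 := by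
  have hgcd : 0 < d.gcd d' := Nat.gcd_pos_of_pos_left _ hd
  rw [← sum_filter]
  conv_lhs => rw [← Nat.sum_totient (d.gcd d')]
  congr 1 with e
  simp only [Nat.mem_divisors, mem_filter, mem_Icc, ← Nat.dvd_gcd_iff]
  exact ⟨fun ⟨he, _⟩ ↦ ⟨⟨Nat.pos_of_dvd_of_pos he hgcd,
    (Nat.le_of_dvd hgcd he).trans ((Nat.gcd_le_left _ hd).trans hdz)⟩, he⟩,
    fun ⟨_, he⟩ ↦ ⟨he, hgcd.ne'⟩⟩

theorem sum_sum_mul_div_lcm_eq (z : ℕ) (β : ℕ → ℝ) :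
    ∑ d ∈ Icc 1 z, ∑ d' ∈ Icc 1 z, (d * β d) * (d' * β d') / d.lcm d' =
      ∑ e ∈ Icc 1 z, φ e * (∑ d ∈ Icc 1 z with e ∣ d, β d) ^ 2 := by
  have hterm {d d' : ℕ} (hd : d ∈ Icc 1 z) (hd' : d' ∈ Icc 1 z) :
      (d * β d) * (d' * β d') / d.lcm d' =
        ∑ e ∈ Icc 1 z, if e ∣ d ∧ e ∣ d' then φ e * (β d * β d') else 0 := by
    rw [mem_Icc] at hd hd'
    have hlcm : (d.lcm d' : ℝ) ≠ 0 := Nat.cast_ne_zero.2 (Nat.lcm_pos hd.1 hd'.1).ne'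
    have hmul : (d.gcd d' * d.lcm d' : ℝ) = d * d' := by exact_mod_cast Nat.gcd_mul_lcm d d'
    calc (d * β d) * (d' * β d') / d.lcm d' = (d.gcd d' : ℝ) * (β d * β d') := by
          rw [div_eq_iff hlcm]
          linear_combination -(β d * β d') * hmul
      _ = _ := by
        rw [gcd_eq_sum_Icc_totient hd.1 hd.2]
        push_cast
        rw [sum_mul]
        simp_rw [ite_mul, zero_mul]
  rw [sum_congr rfl fun d hd ↦ sum_congr rfl fun d' hd' ↦ hterm hd hd']
  simp_rw [sq, sum_filter, sum_mul_sum, mul_sum, ite_mul, mul_ite, zero_mul, mul_zero, ite_self,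
    ite_and]
  rw [sum_congr rfl fun _ _ ↦ sum_comm, sum_comm]

/-- Selberg's sum `∑ μ(q) ^ 2 / φ(q)` over `q ≤ z`, the reciprocal of the density of the sieve. -/
noncomputable def selbergSum (z : ℕ) : ℝ := ∑ q ∈ Icc 1 z, (μ q : ℝ) ^ 2 / φ q

/-- Selberg's optimal sieve weights of level `z`, divided by `d` and left unnormalised: the usual
`λ d` is `d * selbergWeight z d / selbergSum z`. -/
noncomputable def selbergWeight (z d : ℕ) : ℝ :=
  ∑ q ∈ Icc 1 z, if d ∣ q then (μ q : ℝ) / φ q * μ (q / d) else 0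

theorem sum_selbergWeight_mul (z : ℕ) (f : ℕ → ℝ) :
    ∑ d ∈ Icc 1 z, selbergWeight z d * f d =
      ∑ q ∈ Icc 1 z, (μ q : ℝ) / φ q * ∑ x ∈ q.divisorsAntidiagonal, μ x.1 * f x.2 := by
  simp_rw [selbergWeight, sum_mul, ite_mul, zero_mul]
  rw [sum_comm]
  refine sum_congr rfl fun q hq ↦ ?_
  rw [mem_Icc] at hq
  have hdiv : {d ∈ Icc 1 z | d ∣ q} = q.divisors := by
    ext d
    simp only [mem_filter, mem_Icc, Nat.mem_divisors]
    exact ⟨fun h ↦ ⟨h.2, by lia⟩, fun h ↦ ⟨⟨Nat.pos_of_dvd_of_pos h.1 hq.1,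
      (Nat.le_of_dvd hq.1 h.1).trans hq.2⟩, h.1⟩⟩
  rw [← sum_filter, hdiv, Nat.sum_divisorsAntidiagonal' fun i j ↦ (μ i : ℝ) * f j, mul_sum]
  simp_rw [mul_assoc]

theorem sum_selbergWeight_filter_dvd {z e : ℕ} (he : e ∈ Icc 1 z) :
    ∑ d ∈ Icc 1 z with e ∣ d, selbergWeight z d = (μ e : ℝ) / φ e := by
  have hmoebius {q : ℕ} (hq : 0 < q) : ∑ x ∈ q.divisorsAntidiagonal,
      (μ x.1 : ℝ) * (if e ∣ x.2 then 1 else 0) = if q = e then 1 else 0 :=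
    ArithmeticFunction.sum_eq_iff_sum_mul_moebius_eq (f := fun n ↦ if n = e then (1 : ℝ) else 0)
      (g := fun n ↦ if e ∣ n then 1 else 0) |>.1 (fun n hn ↦ by simp [sum_ite_eq', hn.ne']) q hq
  calc ∑ d ∈ Icc 1 z with e ∣ d, selbergWeight z d
      = ∑ d ∈ Icc 1 z, selbergWeight z d * (if e ∣ d then 1 else 0) := by
        simp_rw [sum_filter, mul_ite, mul_one, mul_zero]
    _ = ∑ q ∈ Icc 1 z, (μ q : ℝ) / φ q * (if q = e then 1 else 0) := by
        rw [sum_selbergWeight_mul]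
        exact sum_congr rfl fun q hq ↦ by rw [hmoebius (mem_Icc.1 hq).1]
    _ = _ := by simp_rw [mul_ite, mul_one, mul_zero, sum_ite_eq', if_pos he]

theorem sum_mul_selbergWeight_filter_dvd_prime {z p : ℕ} (hp : p.Prime) (hzp : z < p) :
    ∑ d ∈ Icc 1 z with d ∣ p, d * selbergWeight z d = selbergSum z := by
  have hfilter : {d ∈ Icc 1 z | d ∣ p} = {d ∈ Icc 1 z | d = 1} := by
    refine filter_congr fun d hd ↦ ?_
    rw [Nat.dvd_prime hp, or_iff_left (by rw [mem_Icc] at hd; lia)]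
  rw [hfilter, sum_filter, sum_ite_eq', selbergSum]
  split_ifs with hz
  · simp [selbergWeight, sq, div_mul_eq_mul_div]
  · rw [show z = 0 by simpa using hz]
    simp

theorem abs_selbergWeight_le (z d : ℕ) : |selbergWeight z d| ≤ z := by
  have hμ (n : ℕ) : |(μ n : ℝ)| ≤ 1 := by exact_mod_cast ArithmeticFunction.abs_moebius_le_one
  calc |selbergWeight z d| ≤ ∑ _q ∈ Icc 1 z, 1 := by
        refine (abs_sum_le_sum_abs _ _).trans (sum_le_sum fun q hq ↦ ?_)
        have hφ : (1 : ℝ) ≤ φ q := by exact_mod_cast Nat.totient_pos.2 (mem_Icc.1 hq).1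
        split_ifs
        · rw [abs_mul, abs_div, Nat.abs_cast]
          exact mul_le_one₀ (div_le_one_of_le₀ ((hμ q).trans hφ) (by positivity))
            (abs_nonneg _) (hμ _)
        · simp
    _ = z := by simp

theorem sum_abs_mul_selbergWeight_le (z : ℕ) :
    ∑ d ∈ Icc 1 z, |d * selbergWeight z d| ≤ (z : ℝ) ^ 3 :=
  calc ∑ d ∈ Icc 1 z, |d * selbergWeight z d| ≤ ∑ _d ∈ Icc 1 z, (z : ℝ) * z := by
        refine sum_le_sum fun d hd ↦ ?_
        have hdz : (d : ℝ) ≤ z := by exact_mod_cast (mem_Icc.1 hd).2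
        rw [abs_mul, Nat.abs_cast]
        gcongr
        exact abs_selbergWeight_le z d
    _ = (z : ℝ) ^ 3 := by simp; ring

theorem card_primes_mul_selbergSum_sq_le {z a h : ℕ} {P : Finset ℕ} (hP : P ⊆ Ioc a (a + h))
    (hprime : ∀ p ∈ P, p.Prime ∧ z < p) :
    (#P : ℝ) * selbergSum z ^ 2 ≤ h * selbergSum z + (z : ℝ) ^ 6 := by
  have hdiag : ∑ e ∈ Icc 1 z, φ e * (∑ d ∈ Icc 1 z with e ∣ d, selbergWeight z d) ^ 2 =
      selbergSum z := by
    refine sum_congr rfl fun e he ↦ ?_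
    have hφ : (φ e : ℝ) ≠ 0 := Nat.cast_ne_zero.2 (Nat.totient_pos.2 (mem_Icc.1 he).1).ne'
    rw [sum_selbergWeight_filter_dvd he]
    field_simp
  calc (#P : ℝ) * selbergSum z ^ 2
      = ∑ p ∈ P, (∑ d ∈ Icc 1 z with d ∣ p, d * selbergWeight z d) ^ 2 := by
        rw [← nsmul_eq_mul, ← sum_const]
        exact sum_congr rfl fun p hp ↦ by
          rw [sum_mul_selbergWeight_filter_dvd_prime (hprime p hp).1 (hprime p hp).2]
    _ ≤ ∑ n ∈ Ioc a (a + h), (∑ d ∈ Icc 1 z with d ∣ n, d * selbergWeight z d) ^ 2 :=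
        sum_le_sum_of_subset_of_nonneg hP fun _ _ _ ↦ sq_nonneg _
    _ ≤ h * selbergSum z + (∑ d ∈ Icc 1 z, |d * selbergWeight z d|) ^ 2 := by
        rw [← hdiag, ← sum_sum_mul_div_lcm_eq]
        exact sum_Ioc_sq_sum_filter_dvd_le a h (fun d hd ↦ (mem_Icc.1 hd).1) _
    _ ≤ h * selbergSum z + ((z : ℝ) ^ 3) ^ 2 := by
        gcongr
        exact sum_abs_mul_selbergWeight_le z
    _ = _ := by ring

theorem sum_squarefree_one_div_le_selbergSum (z : ℕ) :
    ∑ q ∈ Icc 1 z with Squarefree q, (1 : ℝ) / q ≤ selbergSum z := by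
  rw [sum_filter, selbergSum]
  refine sum_le_sum fun q hq ↦ ?_
  have hφ : (0 : ℝ) < φ q := by exact_mod_cast Nat.totient_pos.2 (mem_Icc.1 hq).1
  split_ifs with hsq
  · have hμ : (μ q : ℝ) ^ 2 = 1 := by
      exact_mod_cast ArithmeticFunction.moebius_sq_eq_one_of_squarefree hsq
    rw [hμ]
    gcongr
    exact Nat.totient_le q
  · positivity

theorem sum_one_div_le_sum_squarefree_mul (z : ℕ) :
    ∑ n ∈ Icc 1 z, (1 : ℝ) / n ≤
      (∑ q ∈ Icc 1 z with Squarefree q, (1 : ℝ) / q) * ∑ m ∈ Icc 1 z, (1 : ℝ) / m ^ 2 := by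
  choose q m hqm hq using Nat.sq_mul_squarefree
  have hinj : Set.InjOn (fun n ↦ (q n, m n)) (Icc 1 z : Finset ℕ) := by
    intro n _ n' _ h
    simp only [Prod.mk.injEq] at h
    rw [← hqm n, ← hqm n', h.1, h.2]
  have hmem : (Icc 1 z).image (fun n ↦ (q n, m n)) ⊆
      {n ∈ Icc 1 z | Squarefree n} ×ˢ Icc 1 z := by
    rw [image_subset_iff]
    intro n hn
    rw [mem_Icc] at hn
    have hqn : q n ∣ n := ⟨m n ^ 2, by rw [mul_comm, hqm]⟩
    have hmn : m n ∣ n := ⟨m n * q n, by rw [← mul_assoc, ← sq, hqm]⟩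
    simp only [mem_product, mem_filter, mem_Icc]
    exact ⟨⟨⟨Nat.pos_of_dvd_of_pos hqn hn.1, (Nat.le_of_dvd hn.1 hqn).trans hn.2⟩, hq n⟩,
      Nat.pos_of_dvd_of_pos hmn hn.1, (Nat.le_of_dvd hn.1 hmn).trans hn.2⟩
  calc ∑ n ∈ Icc 1 z, (1 : ℝ) / n = ∑ n ∈ Icc 1 z, (1 : ℝ) / q n * (1 / (m n : ℝ) ^ 2) := by
        refine sum_congr rfl fun n _ ↦ ?_
        rw [one_div_mul_one_div, mul_comm, ← Nat.cast_pow, ← Nat.cast_mul, hqm]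
    _ = ∑ x ∈ (Icc 1 z).image (fun n ↦ (q n, m n)), (1 : ℝ) / x.1 * (1 / (x.2 : ℝ) ^ 2) :=
        (sum_image (f := fun x : ℕ × ℕ ↦ (1 : ℝ) / x.1 * (1 / (x.2 : ℝ) ^ 2)) hinj).symm
    _ ≤ _ := by
        rw [sum_mul_sum, ← sum_product']
        exact sum_le_sum_of_subset_of_nonneg hmem fun _ _ _ ↦ by positivity

theorem log_div_two_le_selbergSum (z : ℕ) : log (z + 1) / 2 ≤ selbergSum z := by
  have hzeta : ∑ m ∈ Icc 1 z, (1 : ℝ) / m ^ 2 ≤ 2 := by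
    have h := sum_Ioo_inv_sq_le (α := ℝ) 0 (z + 1)
    rw [show Ioo 0 (z + 1) = Icc 1 z by ext; simp; lia] at h
    simpa using h
  have hharmonic : log (z + 1) ≤ ∑ n ∈ Icc 1 z, (1 : ℝ) / n := by
    simpa [harmonic_eq_sum_Icc] using log_add_one_le_harmonic z
  have hsquarefree : 0 ≤ ∑ q ∈ Icc 1 z with Squarefree q, (1 : ℝ) / q :=
    sum_nonneg fun _ _ ↦ by positivity
  linarith [sum_one_div_le_sum_squarefree_mul z, sum_squarefree_one_div_le_selbergSum z,
    mul_le_mul_of_nonneg_left hzeta hsquarefree]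

theorem card_primes_Ioc_le {a h : ℕ} (hh : 3 ≤ h) {P : Finset ℕ} (hP : P ⊆ Ioc a (a + h))
    (hprime : ∀ p ∈ P, p.Prime ∧ h < p) : (#P : ℝ) ≤ 156 * h / log h := by
  have hh' : (3 : ℝ) ≤ h := by exact_mod_cast hh
  have hlog : 1 ≤ log h := by
    rw [le_log_iff_exp_le (by linarith)]
    exact exp_one_lt_three.le.trans hh'
  -- The level `h ^ (1 / 6)` makes the error term `z ^ 6` at most `h`.
  set y : ℝ := (h : ℝ) ^ (1 / 6 : ℝ)
  have hy0 : 0 < y := by positivity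
  have hy6 : y ^ 6 = h := by
    rw [← rpow_natCast, ← rpow_mul (by positivity)]
    norm_num
  set z := ⌊y⌋₊
  have hz6 : (z : ℝ) ^ 6 ≤ h := by
    rw [← hy6]
    gcongr
    exact Nat.floor_le hy0.le
  have hzh : z ≤ h := (Nat.le_self_pow (n := 6) (by norm_num) z).trans (by exact_mod_cast hz6)
  have hlogz : log h / 6 ≤ log (z + 1) := by
    calc log h / 6 = log y := by rw [← hy6, log_pow]; push_cast; ring
      _ ≤ log (z + 1) := log_le_log hy0 (Nat.lt_floor_add_one y).le
  have hsum : log h / 12 ≤ selbergSum z := by linarith [log_div_two_le_selbergSum z]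
  have hsum0 : 0 < selbergSum z := by linarith
  have hsieve := card_primes_mul_selbergSum_sq_le hP fun p hp ↦
    ⟨(hprime p hp).1, hzh.trans_lt (hprime p hp).2⟩
  have hcard : (#P : ℝ) * selbergSum z ≤ 13 * h := by
    refine le_of_mul_le_mul_right ?_ hsum0
    nlinarith
  have : (#P : ℝ) * (log h / 12) ≤ #P * selbergSum z := by gcongr
  rw [le_div_iff₀ (by linarith)]
  linarith

end SelbergSieve

/-! ### Prime factors of products of consecutive integers -/

section ConsecutiveIntegers

open Filter Finset Real
open scoped Nat.Prime

theorem eventually_exists_prime_mem_Ico (A : ℕ) :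
    ∀ᶠ k : ℕ in atTop, ∀ x : ℕ, k ≤ x → (x : ℝ) ≤ k * log k ^ A →
      ∃ p ∈ Ico x (x + k), p.Prime := by
  have hlogk : Tendsto (fun k : ℕ ↦ log k) atTop atTop :=
    tendsto_log_atTop.comp tendsto_natCast_atTop_atTop
  filter_upwards [hlogk.eventually (eventually_forall_ge_atTop.2
      (eventually_exists_prime_log_mem_Ioo (A + 1))),
    hlogk.eventually_ge_atTop 2, eventually_gt_atTop 0] with k hshort hk2 hk x hkx hx
  have hkx' : (k : ℝ) ≤ x := by exact_mod_cast hkx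
  have hk0 : (0 : ℝ) < k := by exact_mod_cast hk
  have hx0 : (0 : ℝ) < x := hk0.trans_le hkx'
  have hlog : log k ≤ log x := log_le_log hk0 hkx'
  obtain ⟨p, hp, hxp, hpx⟩ := hshort (log x) hlog
  have hp0 : (0 : ℝ) < p := by exact_mod_cast hp.pos
  refine ⟨p, mem_Ico.2 ⟨by exact_mod_cast ((log_lt_log_iff hx0 hp0).1 hxp).le, ?_⟩, hp⟩
  set δ := 1 / log x ^ (A + 1)
  have hlogx : 0 < log x := by linarith
  have hδ0 : 0 < δ := by positivity
  have hδ1 : δ ≤ 1 := (div_le_one₀ (by positivity)).2 (one_le_pow₀ (by linarith))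
  have hexp : exp δ ≤ 1 + 2 * δ := by
    have h := abs_exp_sub_one_le (x := δ) (by rwa [abs_of_pos hδ0])
    rw [abs_of_pos hδ0] at h
    linarith [(abs_le.1 h).2]
  have hδk : x * (2 * δ) ≤ k := by
    rw [mul_one_div, mul_div_assoc', div_le_iff₀ (by positivity)]
    calc (x : ℝ) * 2 ≤ k * log k ^ A * log k := by gcongr
      _ = k * log k ^ (A + 1) := by ring
      _ ≤ k * log x ^ (A + 1) := by gcongr
  have hpk : (p : ℝ) < x + k := by
    calc (p : ℝ) = exp (log p) := (exp_log hp0).symm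
      _ < exp (log x + δ) := exp_lt_exp.2 hpx
      _ = x * exp δ := by rw [exp_add, exp_log hx0]
      _ ≤ x * (1 + 2 * δ) := by gcongr
      _ ≤ x + k := by linarith
  exact_mod_cast hpk

theorem log_choose_le_card_primeFactors_mul_log {n : ℕ} (hn : 0 < n) (k : ℕ) :
    log (n.choose k) ≤ #(n.choose k).primeFactors * log n := by
  rw [log_nat_eq_sum_factorization, Finsupp.sum, Nat.support_factorization, ← nsmul_eq_mul]
  refine sum_le_card_nsmul _ _ _ fun p hp ↦ ?_
  have hp0 : 0 < p := Nat.pos_of_mem_primeFactors hp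
  rw [← log_pow]
  exact log_le_log (by positivity) (by exact_mod_cast Nat.pow_factorization_choose_le hn)

theorem mul_log_div_le_log_choose {x k : ℕ} (hx : 0 < x) (hk : 0 < k) :
    k * log (x / k) ≤ log ((x + k - 1).choose k) := by
  rw [← log_pow]
  refine log_le_log (by positivity) ?_
  calc ((x : ℝ) / k) ^ k = (x : ℝ) ^ k / (k : ℝ) ^ k := div_pow ..
    _ ≤ (x : ℝ) ^ k / k.factorial := by
      gcongr
      exact_mod_cast Nat.factorial_le_pow k
    _ ≤ (x + k - 1).choose k := by
      have h := Nat.pow_le_choose (α := ℝ) k (x + k - 1)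
      rwa [show x + k - 1 + 1 - k = x by lia] at h

theorem mul_log_div_le_card_primeFactors_mul_log {x k : ℕ} (hk : 0 < k) (hkx : k ≤ x) :
    k * log (x / k) ≤ #((x + k - 1).choose k).primeFactors * log (2 * x) := by
  have hle : ((x + k - 1 : ℕ) : ℝ) ≤ 2 * x := by exact_mod_cast (by lia : x + k - 1 ≤ 2 * x)
  have hpos : (0 : ℝ) < (x + k - 1 : ℕ) := by exact_mod_cast (by lia : 0 < x + k - 1)
  calc k * log (x / k) ≤ log ((x + k - 1).choose k) :=
        mul_log_div_le_log_choose (hk.trans_le hkx) hk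
    _ ≤ #((x + k - 1).choose k).primeFactors * log (x + k - 1 : ℕ) :=
        log_choose_le_card_primeFactors_mul_log (by lia) k
    _ ≤ _ := by gcongr

theorem dvd_prod_range_of_dvd_choose {x k p : ℕ} (h : p ∣ (x + k - 1).choose k) :
    p ∣ ∏ m ∈ range k, (x + m) := by
  rw [← Nat.ascFactorial_eq_prod_range, Nat.ascFactorial_eq_factorial_mul_choose']
  exact h.mul_left _

theorem card_le_primeCounting {S : Finset ℕ} {n : ℕ} (hS : ∀ p ∈ S, p.Prime ∧ p ≤ n) :
    #S ≤ π n := by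
  rw [Nat.primeCounting, ← Nat.primesBelow_card_eq_primeCounting']
  exact card_le_card fun p hp ↦ Nat.mem_primesBelow.2 ⟨Nat.lt_succ_of_le (hS p hp).2, (hS p hp).1⟩

theorem log_le_of_card_primeFactors_choose_le {x k : ℕ} {c : ℝ} (hk : 0 < k) (hkx : k ≤ x)
    (hcard : (#((x + k - 1).choose k).primeFactors : ℝ) ≤ c * k) :
    (1 - c) * log x ≤ log k + c := by
  have hk0 : (0 : ℝ) < k := by exact_mod_cast hk
  have hx1 : (1 : ℝ) ≤ x := by exact_mod_cast hk.trans_le hkx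
  have hc : 0 ≤ c := nonneg_of_mul_nonneg_left ((Nat.cast_nonneg _).trans hcard) hk0
  have hlog : log (2 * x) ≤ log x + 1 := by
    rw [log_mul two_ne_zero (by positivity)]
    linarith [log_two_lt_d9]
  have hmul : k * log (x / k) ≤ k * (c * (log x + 1)) :=
    calc k * log (x / k) ≤ #((x + k - 1).choose k).primeFactors * log (2 * x) :=
          mul_log_div_le_card_primeFactors_mul_log hk hkx
      _ ≤ c * k * (log x + 1) := by
        have : 0 ≤ log (2 * x) := log_nonneg (by linarith)
        gcongr
      _ = k * (c * (log x + 1)) := by ring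
  have hdiv := le_of_mul_le_mul_left hmul hk0
  rw [log_div (by positivity) hk0.ne'] at hdiv
  linarith

theorem sum_Icc_one_div_le {a b : ℕ} {t : ℝ} (ha : 0 < a) (ht : 1 ≤ t) (hb : b ≤ t * a) :
    ∑ m ∈ Icc a b, (1 : ℝ) / m ≤ 1 + log t := by
  obtain hba | hab := lt_or_ge b a
  · rw [Icc_eq_empty_of_lt hba, sum_empty]
    linarith [log_nonneg ht]
  have hsum : ∑ m ∈ Icc a b, (1 : ℝ) / m = harmonic b - harmonic (a - 1) := by
    have hunion := sum_Ioc_consecutive (fun m : ℕ ↦ (1 : ℝ) / m) (a - 1).zero_le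
      (by lia : a - 1 ≤ b)
    rw [show Icc a b = Ioc (a - 1) b by ext; simp; lia, eq_sub_iff_add_eq, add_comm]
    simpa [harmonic_eq_sum_Icc, ← Icc_add_one_left_eq_Ioc] using hunion
  have hlower : log a ≤ harmonic (a - 1) := by
    simpa [Nat.sub_add_cancel ha] using log_add_one_le_harmonic (a - 1)
  have hlog : log b ≤ log t + log a := by
    rw [← log_mul (by positivity) (by positivity)]
    exact log_le_log (by exact_mod_cast ha.trans_le hab) hb
  linarith [harmonic_le_one_add_log b]

theorem exists_mul_mem_Ico_of_dvd_prod_range {x k p : ℕ} (hp : p.Prime)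
    (h : p ∣ ∏ m ∈ range k, (x + m)) : ∃ m, m * p ∈ Ico x (x + k) := by
  obtain ⟨i, hi, m, hm⟩ := (hp.prime.dvd_finsetProd_iff _).1 h
  rw [mem_range] at hi
  exact ⟨m, mem_Ico.2 (by rw [mul_comm, ← hm]; lia)⟩

theorem mem_Ioc_of_mul_mem_Ico {x k m p : ℕ} (hx : 0 < x) (hm : 0 < m)
    (h : m * p ∈ Ico x (x + k)) : p ∈ Ioc ((x - 1) / m) ((x - 1) / m + (k / m + 1)) := by
  rw [mem_Ico] at h
  refine mem_Ioc.2 ⟨(Nat.div_lt_iff_lt_mul hm).2 (by lia), ?_⟩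
  by_contra! hlt
  have hmul : m * ((x - 1) / m + 1 + (k / m + 1)) ≤ m * p := Nat.mul_le_mul_left m (by lia)
  rw [mul_add] at hmul
  have := Nat.lt_mul_div_succ (x - 1) hm
  have := Nat.lt_mul_div_succ k hm
  lia

theorem card_primes_mul_mem_Ico_le {x k m : ℕ} (hx : 0 < x) (hm : 2 ≤ m) (hmk : 2 * m ≤ k)
    {P : Finset ℕ} (hP : ∀ p ∈ P, p.Prime ∧ k < p ∧ m * p ∈ Ico x (x + k)) :
    (#P : ℝ) ≤ 312 * (k / m) / log (k / m) := by
  have hm0 : (0 : ℝ) < m := by exact_mod_cast (by lia : 0 < m)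
  have hdiv : 2 ≤ k / m := (Nat.le_div_iff_mul_le (by lia)).2 hmk
  have hkm : (2 : ℝ) ≤ k / m := by
    rw [le_div_iff₀ hm0]
    exact_mod_cast hmk
  have hlower : (k : ℝ) / m ≤ (k / m + 1 : ℕ) := by
    rw [div_le_iff₀' hm0]
    exact_mod_cast (Nat.lt_mul_div_succ k (by lia)).le
  have hupper : ((k / m + 1 : ℕ) : ℝ) ≤ 2 * (k / m) := by
    have : ((k / m : ℕ) : ℝ) ≤ k / m := Nat.cast_div_le
    push_cast
    linarith
  have hhalf : k / m ≤ k / 2 := Nat.div_le_div_left hm two_pos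
  have hlog : 0 < log ((k : ℝ) / m) := log_pos (by linarith)
  calc (#P : ℝ) ≤ 156 * (k / m + 1 : ℕ) / log (k / m + 1 : ℕ) :=
        card_primes_Ioc_le (by lia)
          (fun p hp ↦ mem_Ioc_of_mul_mem_Ico hx (by lia) (hP p hp).2.2)
          fun p hp ↦ ⟨(hP p hp).1, by have := (hP p hp).2.1; lia⟩
    _ ≤ 156 * (2 * (k / m)) / log (k / m) := by gcongr
    _ = _ := by ring

theorem card_primes_mul_mem_Ico_le_of_mul_le {x k m : ℕ} (hx : 0 < x) (hxk : 4 * x ≤ k ^ 2)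
    (hm : 2 ≤ m) (hmk : m * k ≤ 2 * x) {P : Finset ℕ}
    (hP : ∀ p ∈ P, p.Prime ∧ k < p ∧ m * p ∈ Ico x (x + k)) :
    (#P : ℝ) ≤ 312 * k / log (k ^ 2 / (2 * x)) * (1 / m) := by
  have hx0 : (0 : ℝ) < x := by exact_mod_cast hx
  have hm0 : (0 : ℝ) < m := by exact_mod_cast zero_lt_two.trans_le hm
  have hxk' : (4 * x : ℝ) ≤ k ^ 2 := by exact_mod_cast hxk
  have hmk' : (m * k : ℝ) ≤ 2 * x := by exact_mod_cast hmk
  have hk0 : (0 : ℝ) < k := by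
    refine (Nat.cast_nonneg k).lt_of_ne' fun h ↦ ?_
    rw [h] at hxk'
    linarith
  have h2mk : 2 * m ≤ k := by exact_mod_cast (by nlinarith : (2 * m : ℝ) ≤ k)
  have hdiv : (k : ℝ) ^ 2 / (2 * x) ≤ k / m := by
    rw [div_le_div_iff₀ (by positivity) hm0]
    nlinarith
  have hlog : 0 < log ((k : ℝ) ^ 2 / (2 * x)) :=
    log_pos ((one_lt_div₀ (by positivity)).2 (by linarith))
  calc (#P : ℝ) ≤ 312 * (k / m) / log (k / m) := card_primes_mul_mem_Ico_le hx hm h2mk hP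
    _ ≤ 312 * (k / m) / log (k ^ 2 / (2 * x)) :=
      div_le_div_of_nonneg_left (by positivity) hlog (log_le_log (by positivity) hdiv)
    _ = _ := by ring

theorem mem_Icc_of_mul_mem_Ico {x k m p : ℕ} {Y : ℝ} (hk : 0 < k) (hkx : k ≤ x) (hY : 0 < Y)
    (hkp : k < p) (hpY : p ≤ Y) (h : m * p ∈ Ico x (x + k)) :
    m ∈ Icc ⌈x / Y⌉₊ ⌊(2 * x / k : ℝ)⌋₊ := by
  rw [mem_Ico] at h
  refine mem_Icc.2 ⟨Nat.ceil_le.2 ?_, Nat.le_floor ?_⟩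
  · rw [div_le_iff₀ hY]
    calc (x : ℝ) ≤ m * p := by exact_mod_cast h.1
      _ ≤ m * Y := by gcongr
  · rw [le_div_iff₀ (by exact_mod_cast hk)]
    have : m * k ≤ m * p := Nat.mul_le_mul_left m hkp.le
    exact_mod_cast (by lia : m * k ≤ 2 * x)

theorem card_primes_dvd_prod_range_le {x k : ℕ} {Y t : ℝ} (hkx : k ≤ x) (hxk : 4 * x ≤ k ^ 2)
    (hY : 0 < Y) (hYx : Y < x) (ht : 1 ≤ t) (hYt : 2 * Y ≤ t * k) {Q : Finset ℕ}
    (hQ : ∀ p ∈ Q, p.Prime ∧ k < p ∧ p ≤ Y ∧ p ∣ ∏ m ∈ range k, (x + m)) :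
    (#Q : ℝ) ≤ 312 * k / log (k ^ 2 / (2 * x)) * (1 + log t) := by
  have hx0 : (0 : ℝ) < x := hY.trans hYx
  have hx : 0 < x := by exact_mod_cast hx0
  have hk : 0 < k := Nat.pos_of_ne_zero fun h ↦ by simp [h] at hxk; lia
  have hk0 : (0 : ℝ) < k := by exact_mod_cast hk
  have hxk' : (4 * x : ℝ) ≤ k ^ 2 := by exact_mod_cast hxk
  have hlog : 0 < log (k ^ 2 / (2 * x)) := log_pos ((one_lt_div₀ (by positivity)).2 (by linarith))
  set I := Icc ⌈x / Y⌉₊ ⌊(2 * x / k : ℝ)⌋₊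
  have hcover : Q ⊆ I.biUnion fun m ↦ {p ∈ Q | m * p ∈ Ico x (x + k)} := by
    intro p hp
    obtain ⟨hprime, hkp, hpY, hdvd⟩ := hQ p hp
    obtain ⟨m, hm⟩ := exists_mul_mem_Ico_of_dvd_prod_range hprime hdvd
    exact mem_biUnion.2 ⟨m, mem_Icc_of_mul_mem_Ico hk hkx hY hkp hpY hm, mem_filter.2 ⟨hp, hm⟩⟩
  have hcard {m : ℕ} (hm : m ∈ I) : (#{p ∈ Q | m * p ∈ Ico x (x + k)} : ℝ) ≤
      312 * k / log (k ^ 2 / (2 * x)) * (1 / m) := by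
    obtain ⟨hm1, hm2⟩ := mem_Icc.1 hm
    have hm1' : 1 < m := by exact_mod_cast ((one_lt_div₀ hY).2 hYx).trans_le (Nat.ceil_le.1 hm1)
    have hm2' : (m : ℝ) * k ≤ 2 * x :=
      (le_div_iff₀ hk0).1 ((Nat.le_floor_iff (by positivity)).1 hm2)
    refine card_primes_mul_mem_Ico_le_of_mul_le hx hxk hm1' (by exact_mod_cast hm2') fun p hp ↦ ?_
    rw [mem_filter] at hp
    exact ⟨(hQ p hp.1).1, (hQ p hp.1).2.1, hp.2⟩
  calc (#Q : ℝ) ≤ ∑ m ∈ I, (#{p ∈ Q | m * p ∈ Ico x (x + k)} : ℝ) := by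
        exact_mod_cast (card_le_card hcover).trans card_biUnion_le
    _ ≤ ∑ m ∈ I, 312 * k / log (k ^ 2 / (2 * x)) * (1 / m) := sum_le_sum fun _ ↦ hcard
    _ = 312 * k / log (k ^ 2 / (2 * x)) * ∑ m ∈ I, (1 / m : ℝ) := (mul_sum ..).symm
    _ ≤ _ := by
      gcongr
      refine sum_Icc_one_div_le (Nat.ceil_pos.2 (by positivity)) ht ?_
      calc (⌊(2 * x / k : ℝ)⌋₊ : ℝ) ≤ 2 * x / k := Nat.floor_le (by positivity)
        _ ≤ t * (x / Y) := by
          rw [mul_div_assoc', div_le_div_iff₀ hk0 hY]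
          nlinarith
        _ ≤ t * ⌈x / Y⌉₊ := by
          gcongr
          exact Nat.le_ceil _

theorem eventually_primeCounting_floor_le :
    ∀ᶠ y : ℝ in atTop, (π ⌊y⌋₊ : ℝ) ≤ 7 / 5 * y / log y := by
  filter_upwards [Chebyshev.eventually_primeCounting_le (ε := 0.01) (by norm_num),
    eventually_ge_atTop 1] with y hy hy1
  have hlog4 : log 4 + 0.01 ≤ 7 / 5 := by
    rw [show (4 : ℝ) = 2 ^ 2 by norm_num, log_pow]
    push_cast
    linarith [log_two_lt_d9]
  have := log_nonneg hy1
  exact hy.trans (by gcongr)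

theorem le_maxPrimeFac {n p : ℕ} (hn : n ≠ 0) (hp : p.Prime) (hpn : p ∣ n) :
    p ≤ maxPrimeFac n :=
  le_sup (f := id) (Nat.mem_primeFactors.2 ⟨hp, hpn, hn⟩)

theorem card_primeFactors_choose_le {x k : ℕ} (hk : 1 ≤ log k) (hkx : k ≤ x)
    (hYx : 2 / 7 * k * log k < x) (hlogx : log (4 * x) ≤ 15 / 8 * log k)
    (hπ : (π k : ℝ) ≤ 7 / 5 * k / log k)
    (hle : ∀ p : ℕ, p.Prime → p ∣ ∏ m ∈ range k, (x + m) → (p : ℝ) ≤ 2 / 7 * k * log k) :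
    (#((x + k - 1).choose k).primeFactors : ℝ) ≤
      k / log k * (2 + 2496 * (1 + log (log k))) := by
  have hk1 : (1 : ℝ) < k := (log_pos_iff (Nat.cast_nonneg k)).1 (by linarith)
  have hx0 : (0 : ℝ) < x := by linarith [(Nat.cast_le (α := ℝ)).2 hkx]
  have hloglog := log_nonneg hk
  have hxk : (4 * x : ℝ) ≤ k ^ 2 := by
    rw [← log_le_log_iff (by positivity) (by positivity), log_pow]
    push_cast
    linarith
  have hlog : log k / 8 ≤ log (k ^ 2 / (2 * x)) := by
    have : log (2 * x) ≤ log (4 * x) := log_le_log (by positivity) (by linarith)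
    rw [log_div (by positivity) (by positivity), log_pow]
    push_cast
    linarith
  set S := ((x + k - 1).choose k).primeFactors
  have hsmall : (#{p ∈ S | p ≤ k} : ℝ) ≤ 7 / 5 * k / log k := by
    refine le_trans ?_ hπ
    exact_mod_cast card_le_primeCounting fun p hp ↦
      ⟨Nat.prime_of_mem_primeFactors (mem_filter.1 hp).1, (mem_filter.1 hp).2⟩
  have hlarge : (#{p ∈ S | ¬ p ≤ k} : ℝ) ≤ 312 * k / (log k / 8) * (1 + log (log k)) := by
    calc _ ≤ 312 * k / log (k ^ 2 / (2 * x)) * (1 + log (log k)) := by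
          refine card_primes_dvd_prod_range_le (Y := 2 / 7 * k * log k) hkx
            (by exact_mod_cast hxk) (by positivity) hYx hk (by nlinarith) fun p hp ↦ ?_
          obtain ⟨hpS, hkp⟩ := mem_filter.1 hp
          have hprime := Nat.prime_of_mem_primeFactors hpS
          have hdvd := dvd_prod_range_of_dvd_choose (Nat.dvd_of_mem_primeFactors hpS)
          exact ⟨hprime, not_le.1 hkp, hle p hprime hdvd, hdvd⟩
      _ ≤ _ := by gcongr
  have hsplit : (#S : ℝ) = #{p ∈ S | p ≤ k} + #{p ∈ S | ¬ p ≤ k} := by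
    exact_mod_cast (card_filter_add_card_filter_not _).symm
  calc (#S : ℝ) ≤ 7 / 5 * k / log k + 312 * k / (log k / 8) * (1 + log (log k)) := by linarith
    _ = k / log k * (7 / 5 + 2496 * (1 + log (log k))) := by ring
    _ ≤ _ := by gcongr; norm_num

theorem log_four_mul_le {x k : ℕ} (hk : 100 ≤ log k) (hkx : k ≤ x)
    (hπ : (π ⌊2 / 7 * k * log k⌋₊ : ℝ) ≤ 7 / 5 * (2 / 7 * k * log k) / log (2 / 7 * k * log k))
    (hle : ∀ p : ℕ, p.Prime → p ∣ ∏ m ∈ range k, (x + m) → (p : ℝ) ≤ 2 / 7 * k * log k) :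
    log (4 * x) ≤ 15 / 8 * log k := by
  have hk1 : (1 : ℝ) < k := (log_pos_iff (Nat.cast_nonneg k)).1 (by linarith)
  have hk0 : 0 < k := by exact_mod_cast zero_lt_one.trans hk1
  have hlogY : log k ≤ log (2 / 7 * k * log k) := log_le_log (by positivity) (by nlinarith)
  have hcard : (#((x + k - 1).choose k).primeFactors : ℝ) ≤ 2 / 5 * k := by
    calc (#((x + k - 1).choose k).primeFactors : ℝ) ≤ π ⌊2 / 7 * k * log k⌋₊ := by
          refine Nat.cast_le.2 (card_le_primeCounting fun p hp ↦ ?_)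
          have hprime := Nat.prime_of_mem_primeFactors hp
          exact ⟨hprime, Nat.le_floor (hle p hprime
            (dvd_prod_range_of_dvd_choose (Nat.dvd_of_mem_primeFactors hp)))⟩
      _ ≤ 7 / 5 * (2 / 7 * k * log k) / log (2 / 7 * k * log k) := hπ
      _ ≤ 7 / 5 * (2 / 7 * k * log k) / log k := by gcongr
      _ = 2 / 5 * k := by field_simp
  have hlogx := log_le_of_card_primeFactors_choose_le hk0 hkx hcard
  have hlog4 : log 4 < 2 := by
    rw [show (4 : ℝ) = 2 ^ 2 by norm_num, log_pow]
    push_cast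
    linarith [log_two_lt_d9]
  have hx0 : (x : ℝ) ≠ 0 := by exact_mod_cast (hk0.trans_le hkx).ne'
  rw [log_mul four_ne_zero hx0]
  linarith

theorem log_div_le_mul_log_log {x k : ℕ} (hk : 100 ≤ log k) (hkx : k ≤ x)
    (hYx : 2 / 7 * k * log k < x) (hπk : (π k : ℝ) ≤ 7 / 5 * k / log k)
    (hπ : (π ⌊2 / 7 * k * log k⌋₊ : ℝ) ≤ 7 / 5 * (2 / 7 * k * log k) / log (2 / 7 * k * log k))
    (hle : ∀ p : ℕ, p.Prime → p ∣ ∏ m ∈ range k, (x + m) → (p : ℝ) ≤ 2 / 7 * k * log k) :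
    log (x / k) ≤ 10000 * log (log k) := by
  have hk1 : (1 : ℝ) < k := (log_pos_iff (Nat.cast_nonneg k)).1 (by linarith)
  have hk0 : 0 < k := by exact_mod_cast zero_lt_one.trans hk1
  have hx0 : (0 : ℝ) < x := by exact_mod_cast hk0.trans_le hkx
  have hlog4x := log_four_mul_le hk hkx hπ hle
  have hlog2x : log (2 * x) ≤ 2 * log k := by
    have : log (2 * x) ≤ log (4 * x) := log_le_log (by positivity) (by linarith)
    linarith
  have hloglog : 1 ≤ log (log k) := by
    rw [le_log_iff_exp_le (by linarith)]
    linarith [exp_one_lt_d9]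
  have hmul : k * log (x / k) ≤ k * (10000 * log (log k)) :=
    calc k * log (x / k) ≤ #((x + k - 1).choose k).primeFactors * log (2 * x) :=
          mul_log_div_le_card_primeFactors_mul_log hk0 hkx
      _ ≤ k / log k * (2 + 2496 * (1 + log (log k))) * (2 * log k) := by
        have : 0 ≤ log (2 * x) := log_nonneg (by linarith [(Nat.cast_le (α := ℝ)).2 hkx])
        gcongr
        exact card_primeFactors_choose_le (by linarith) hkx hYx hlog4x hπk hle
      _ = k * (2 * (2 + 2496 * (1 + log (log k)))) := by field_simp
      _ ≤ _ := mul_le_mul_of_nonneg_left (by linarith) (by positivity)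
  exact le_of_mul_le_mul_left hmul (by positivity)

theorem exists_eventually_le_mul_log_pow_of_maxPrimeFac_le :
    ∃ A : ℕ, ∀ᶠ k : ℕ in atTop, ∀ x : ℕ, k ≤ x →
      (maxPrimeFac (∏ m ∈ range k, (x + m)) : ℝ) ≤ 2 / 7 * k * log k →
      (x : ℝ) ≤ k * log k ^ A := by
  obtain ⟨A, hA⟩ : ∃ A : ℕ, (A : ℝ) = 10000 := ⟨10000, by norm_num⟩
  have hcast : Tendsto (fun k : ℕ ↦ (k : ℝ)) atTop atTop := tendsto_natCast_atTop_atTop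
  have hlogk : Tendsto (fun k : ℕ ↦ log k) atTop atTop := tendsto_log_atTop.comp hcast
  have hY : Tendsto (fun k : ℕ ↦ 2 / 7 * k * log k) atTop atTop :=
    (hcast.const_mul_atTop (by norm_num)).atTop_mul_atTop₀ hlogk
  refine ⟨A, ?_⟩
  filter_upwards [hlogk.eventually_ge_atTop 100, hcast.eventually eventually_primeCounting_floor_le,
    hY.eventually eventually_primeCounting_floor_le] with k hk hπk hπ x hkx hmax
  rw [Nat.floor_natCast] at hπk
  have hk1 : (1 : ℝ) < k := (log_pos_iff (Nat.cast_nonneg k)).1 (by linarith)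
  have hk0 : 0 < k := by exact_mod_cast zero_lt_one.trans hk1
  have hx0 : (0 : ℝ) < x := by exact_mod_cast hk0.trans_le hkx
  have hle (p : ℕ) (hp : p.Prime) (hdvd : p ∣ ∏ m ∈ range k, (x + m)) :
      (p : ℝ) ≤ 2 / 7 * k * log k := by
    refine (Nat.cast_le.2 (le_maxPrimeFac ?_ hp hdvd)).trans hmax
    exact prod_ne_zero_iff.2 fun m _ ↦ by lia
  by_contra! hlt
  have hYx : 2 / 7 * k * log k < x := by
    have hA0 : A ≠ 0 := by rintro rfl; norm_num at hA
    calc 2 / 7 * k * log k ≤ k * log k := by nlinarith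
      _ ≤ k * log k ^ A := by
        gcongr
        exact le_self_pow₀ (by linarith) hA0
      _ < x := hlt
  have hlog := log_div_le_mul_log_log hk hkx hYx hπk hπ hle
  rw [← hA, ← log_pow, log_le_log_iff (by positivity) (by positivity),
    div_le_iff₀' (by positivity)] at hlog
  exact hlt.not_ge hlog

end ConsecutiveIntegers

/-- Erdős' theorem (with explicit constant `2/7` as in Luca–Saradha–Shorey): there is a
constant `κ` such that for all `k ≥ κ` and all positive `x` with `x, x+1, …, x+k-1` all
composite, the greatest prime factor of `Δ(x, k) = x(x+1)⋯(x+k-1)` exceeds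
`(2/7) k log k`. -/
theorem erdos_greatest_prime_factor :
    ∃ κ : ℕ, ∀ k x : ℕ, κ ≤ k → 1 ≤ x →
      (∀ m ∈ Finset.range k, ¬ (x + m).Prime) →
      (2 / 7 : ℝ) * k * Real.log k <
        (maxPrimeFac (∏ m ∈ Finset.range k, (x + m)) : ℝ) := by
  obtain ⟨A, hA⟩ := exists_eventually_le_mul_log_pow_of_maxPrimeFac_le
  obtain ⟨κ, hκ⟩ := Filter.eventually_atTop.1 (hA.and (eventually_exists_prime_mem_Ico A))
  refine ⟨κ, fun k x hk hx hcomposite ↦ ?_⟩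
  obtain ⟨hbound, hshort⟩ := hκ k hk
  have hnot_prime (p : ℕ) (hp : p ∈ Finset.Ico x (x + k)) : ¬ p.Prime := by
    obtain ⟨hxp, hpx⟩ := Finset.mem_Ico.1 hp
    simpa [Nat.add_sub_cancel' hxp] using hcomposite (p - x) (Finset.mem_range.2 (by lia))
  have hkx : k ≤ x := by
    by_contra! hxk
    obtain ⟨p, hp, hxp, hpx⟩ := Nat.exists_prime_lt_and_le_two_mul x (by lia)
    exact hnot_prime p (Finset.mem_Ico.2 (by lia)) hp
  by_contra! hmax
  obtain ⟨p, hp, hprime⟩ := hshort x hkx (hbound x hkx hmax)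
  exact hnot_prime p hp hprime
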